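/- arXiv:2509.14359 — 7 statements merged into one kernel-verified Lean document; each statement's English description precedes it below -/
import Mathlib

section
/- Let n ≥ 1 and let N = {n_1,…,n_s; n} be a scheme for distinct nodes X = {A_1,…,A_s} ⊂ ℝ² such that Σ_{k=1}^s C(n_k+1,2) ≤ C(n+2,2) and Σ_{k=1}^s n_k ≤ 2n+2. Then the Hermite interpolation problem (N,X) is n-solvable if and only if (i) for every line ℓ, the sum of the multiplicities n_k over the nodes A_k lying on ℓ is at most n+1, and (ii) for every conic β, the sum of the multiplicities n_k over the nodes A_k lying on β is at most 2n+1. -/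
open MvPolynomial

/-- `Dij i j p` is the partial derivative `D^{ij} p = ∂^{i+j} p / ∂x^i ∂y^j`. -/
noncomputable def Dij (i j : ℕ) (p : MvPolynomial (Fin 2) ℝ) : MvPolynomial (Fin 2) ℝ :=
  (fun q => pderiv (0 : Fin 2) q)^[i] ((fun q => pderiv (1 : Fin 2) q)^[j] p)

/-- The Hermite interpolation problem with multiplicities `nk` on the nodes `A` is
`n`-solvable: every data admits an interpolant in `Π_n`. -/
def HermiteSolvable (n s : ℕ) (nk : Fin s → ℕ) (A : Fin s → Fin 2 → ℝ) : Prop :=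
  ∀ c : Fin s → ℕ → ℕ → ℝ,
    ∃ p : MvPolynomial (Fin 2) ℝ, p.totalDegree ≤ n ∧
      ∀ (k : Fin s) (i j : ℕ), i + j + 1 ≤ nk k → eval (A k) (Dij i j p) = c k i j

namespace HS

/-- bivariate polynomials -/
abbrev R := MvPolynomial (Fin 2) ℝ

/-- translation -/
noncomputable def tr (A : Fin 2 → ℝ) : R →ₐ[ℝ] R := aeval (fun i => X i + C (A i))

/-- exponent -/
noncomputable def mo (i j : ℕ) : Fin 2 →₀ ℕ := Finsupp.single 0 i + Finsupp.single 1 j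

lemma mo_degree (i j : ℕ) : (mo i j).degree = i + j := by
  simp [mo]

lemma mo_self (x : Fin 2 →₀ ℕ) : mo (x 0) (x 1) = x := by
  ext i; fin_cases i <;> simp [mo]

lemma mo_inj {i j i' j' : ℕ} (h : mo i j = mo i' j') : i = i' ∧ j = j' := by
  constructor
  · have := DFunLike.congr_fun h 0; simpa [mo] using this
  · have := DFunLike.congr_fun h 1; simpa [mo] using this

lemma tr_tr_neg (A : Fin 2 → ℝ) (p : R) : tr A (tr (-A) p) = p := by
  have : (tr A).comp (tr (-A)) = AlgHom.id ℝ R := by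
    ext i; simp [tr]
  exact DFunLike.congr_fun this p

lemma tr_zero (p : R) : tr 0 p = p := by
  have : (tr 0) = AlgHom.id ℝ R := by
    ext i; simp [tr]
  exact DFunLike.congr_fun this p

lemma eval_eq (A : Fin 2 → ℝ) (p : R) : eval A p = coeff 0 (tr A p) := by
  have : (eval A) = (constantCoeff).comp (tr A).toRingHom := by
    apply MvPolynomial.ringHom_ext
    · intro r; simp [tr]
    · intro i; simp [tr]
  rw [this]; rfl

lemma pderiv_tr (A : Fin 2 → ℝ) (i : Fin 2) (p : R) : pderiv i (tr A p) = tr A (pderiv i p) := by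
  induction p using MvPolynomial.induction_on with
  | C a => simp [tr]
  | add p q hp hq => simp [hp, hq]
  | mul_X p j hp =>
    simp only [map_mul, Derivation.leibniz, hp, smul_eq_mul, map_add]
    congr 2
    by_cases h : j = i
    · subst h; simp [tr]
    · simp [tr, pderiv_X, h]

lemma Dij_tr (A : Fin 2 → ℝ) (i j : ℕ) (p : R) : Dij i j (tr A p) = tr A (Dij i j p) := by
  have h1 : ∀ (l : Fin 2) (i : ℕ) (p : R), (fun q => pderiv l q)^[i] (tr A p)
      = tr A ((fun q => pderiv l q)^[i] p) := by
    intro l i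
    induction i with
    | zero => simp
    | succ i ih => intro p; simp only [Function.iterate_succ_apply, pderiv_tr, ih]
  unfold Dij
  rw [h1, h1]

lemma coeff_iter0 (i a b : ℕ) (p : R) :
    coeff (mo a b) ((fun q => pderiv (0 : Fin 2) q)^[i] p)
      = coeff (mo (a + i) b) p * ((a + 1).ascFactorial i : ℝ) := by
  induction i generalizing a with
  | zero => simp
  | succ i ih =>
    rw [Function.iterate_succ_apply', coeff_pderiv]
    have : mo a b + Finsupp.single 0 1 = mo (a+1) b := by
      simp only [mo, Finsupp.single_add]; abel
    have h3 : (a + 1).ascFactorial (i + 1) = (a + 1) * (a + 1 + 1).ascFactorial i := by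
      rw [Nat.ascFactorial_succ, Nat.succ_ascFactorial]
    have h2 : mo a b 0 = a := by simp [mo]
    rw [this, ih, h3, h2, show a + 1 + i = a + (i + 1) by omega]
    push_cast
    ring

lemma coeff_iter1 (i a b : ℕ) (p : R) :
    coeff (mo a b) ((fun q => pderiv (1 : Fin 2) q)^[i] p)
      = coeff (mo a (b + i)) p * ((b + 1).ascFactorial i : ℝ) := by
  induction i generalizing b with
  | zero => simp
  | succ i ih =>
    rw [Function.iterate_succ_apply', coeff_pderiv]
    have : mo a b + Finsupp.single 1 1 = mo a (b+1) := by
      simp only [mo, Finsupp.single_add]; abel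
    have h3 : (b + 1).ascFactorial (i + 1) = (b + 1) * (b + 1 + 1).ascFactorial i := by
      rw [Nat.ascFactorial_succ, Nat.succ_ascFactorial]
    have h2 : mo a b 1 = b := by simp [mo]
    rw [this, ih, h3, h2, show b + 1 + i = b + (i + 1) by omega]
    push_cast
    ring

lemma coeff_Dij (i j : ℕ) (p : R) :
    coeff 0 (Dij i j p) = coeff (mo i j) p * ((i.factorial : ℝ) * j.factorial) := by
  have h0 : (0 : Fin 2 →₀ ℕ) = mo 0 0 := by simp [mo]
  unfold Dij
  rw [h0, coeff_iter0, coeff_iter1]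
  simp [Nat.one_ascFactorial]
  ring

lemma eval_Dij (A : Fin 2 → ℝ) (i j : ℕ) (p : R) :
    eval A (Dij i j p) = coeff (mo i j) (tr A p) * ((i.factorial : ℝ) * j.factorial) := by
  rw [eval_eq, ← Dij_tr, coeff_Dij]

/-- vanishing to order m at A -/
noncomputable def J (A : Fin 2 → ℝ) (m : ℕ) : Ideal R := (idealOfVars (Fin 2) ℝ ^ m).comap (tr A)

lemma mem_J {A : Fin 2 → ℝ} {m : ℕ} {p : R} :
    p ∈ J A m ↔ ∀ i j, i + j < m → coeff (mo i j) (tr A p) = 0 := by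
  unfold J
  rw [Ideal.mem_comap, mem_pow_idealOfVars_iff']
  constructor
  · intro h i j hij
    exact h _ (by rw [mo_degree]; exact hij)
  · intro h x hx
    rw [← mo_self x]
    apply h
    rwa [← mo_degree, mo_self]

lemma J_zero (A : Fin 2 → ℝ) (p : R) : p ∈ J A 0 := by
  simp [J]

lemma J_one {A : Fin 2 → ℝ} {p : R} : p ∈ J A 1 ↔ eval A p = 0 := by
  rw [mem_J, eval_eq]
  have h0 : (0 : Fin 2 →₀ ℕ) = mo 0 0 := by simp [mo]
  constructor
  · intro h; rw [h0]; exact h 0 0 (by omega)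
  · intro h i j hij
    obtain rfl : i = 0 := by omega
    obtain rfl : j = 0 := by omega
    rw [← h0, h]

lemma J_mono {A : Fin 2 → ℝ} {m m' : ℕ} (h : m ≤ m') {p : R} (hp : p ∈ J A m') : p ∈ J A m := by
  rw [mem_J] at *
  intro i j hij; exact hp i j (by omega)

lemma J_mul {A : Fin 2 → ℝ} {a b : ℕ} {p q : R} (hp : p ∈ J A a) (hq : q ∈ J A b) :
    p * q ∈ J A (a + b) := by
  unfold J at *
  rw [Ideal.mem_comap, map_mul, pow_add]
  exact Ideal.mul_mem_mul hp hq

lemma J_pow {A : Fin 2 → ℝ} {p : R} (hp : eval A p = 0) (m : ℕ) : p ^ m ∈ J A m := by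
  unfold J
  rw [Ideal.mem_comap, map_pow]
  apply Ideal.pow_mem_pow
  have := J_one.2 hp
  simpa [J] using this

/-- polynomial with prescribed Taylor coefficients -/
noncomputable def mk (m : ℕ) (c : ℕ → ℕ → ℝ) : R :=
  ∑ i ∈ Finset.range m, ∑ j ∈ Finset.range (m - i), monomial (mo i j) (c i j)

lemma coeff_mk (m : ℕ) (c : ℕ → ℕ → ℝ) (i j : ℕ) (h : i + j < m) :
    coeff (mo i j) (mk m c) = c i j := by
  classical
  unfold mk
  simp only [coeff_sum, coeff_monomial]
  rw [Finset.sum_eq_single i, Finset.sum_eq_single j]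
  · simp
  · intro b _ hb
    rw [if_neg]; intro h; exact hb (mo_inj h).2
  · intro h'; simp at h'; omega
  · intro b _ hb
    apply Finset.sum_eq_zero
    intro x _
    rw [if_neg]; intro h; exact hb (mo_inj h).1
  · intro h'; simp at h'; omega

lemma deg_mk (m : ℕ) (c : ℕ → ℕ → ℝ) : (mk (m+1) c).totalDegree ≤ m := by
  unfold mk
  apply totalDegree_finsetSum_le
  intro i hi
  apply totalDegree_finsetSum_le
  intro j hj
  refine (totalDegree_monomial_le _ _).trans ?_
  have := mo_degree i j
  simp only [Finset.mem_range] at hi hj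
  rw [Finsupp.degree_eq_sum] at this
  rw [Finsupp.sum_fintype _ _ (by simp)]
  simp only [id]
  omega

/-- Solvability in ideal form. -/
def Sol {s : ℕ} (A : Fin s → Fin 2 → ℝ) (n : ℕ) (m : Fin s → ℕ) : Prop :=
  ∀ f : Fin s → R, ∃ p : R, p.totalDegree ≤ n ∧ ∀ k, p - f k ∈ J (A k) (m k)

lemma hermite_iff {s : ℕ} (A : Fin s → Fin 2 → ℝ) (n : ℕ) (m : Fin s → ℕ) :
    HermiteSolvable n s m A ↔ Sol A n m := by
  constructor
  · intro h f
    obtain ⟨p, hp, hp'⟩ := h (fun k i j => eval (A k) (Dij i j (f k)))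
    refine ⟨p, hp, fun k => mem_J.2 fun i j hij => ?_⟩
    have := hp' k i j hij
    rw [eval_Dij, eval_Dij] at this
    have h2 := mul_right_cancel₀ (by positivity) this
    rw [map_sub, coeff_sub, h2, sub_self]
  · intro h c
    obtain ⟨p, hp, hp'⟩ := h (fun k => tr (-(A k)) (mk (m k)
      (fun i j => c k i j / ((i.factorial : ℝ) * j.factorial))))
    refine ⟨p, hp, fun k i j hij => ?_⟩
    have := mem_J.1 (hp' k) i j hij
    rw [map_sub, coeff_sub, tr_tr_neg, coeff_mk _ _ _ _ (by omega)] at this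
    rw [eval_Dij, sub_eq_zero.1 this]
    field_simp

/-- index type for Taylor coefficients -/
abbrev Idx (m : ℕ) := Σ i : Fin m, Fin (m - i)

lemma card_Idx (m : ℕ) : Fintype.card (Idx m) = (m + 1).choose 2 := by
  rw [Fintype.card_sigma]
  simp only [Fintype.card_fin]
  rw [Fin.sum_univ_eq_sum_range (fun i => m - i) m]
  have := Finset.sum_range_reflect (fun i => i + 1) m
  rw [Nat.choose_two_right]
  have h2 : ∑ i ∈ Finset.range m, (m - i) = ∑ i ∈ Finset.range m, (i+1) := by
    rw [← this]
    apply Finset.sum_congr rfl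
    intro i hi; simp at hi; omega
  rw [h2, ← Finset.sum_range_id (m+1), Finset.sum_range_succ']
  simp

/-- Taylor map -/
noncomputable def T (A : Fin 2 → ℝ) (m : ℕ) : R →ₗ[ℝ] (Idx m → ℝ) :=
  LinearMap.pi fun x => (lcoeff ℝ (mo x.1 x.2)).comp (tr A).toLinearMap

lemma T_eq_zero {A : Fin 2 → ℝ} {m : ℕ} {p : R} : T A m p = 0 ↔ p ∈ J A m := by
  rw [mem_J]
  constructor
  · intro h i j hij
    exact congr_fun h ⟨⟨i, by omega⟩, ⟨j, by simp; omega⟩⟩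
  · intro h
    ext ⟨i, j⟩
    exact h i j (by omega)

lemma T_surj (A : Fin 2 → ℝ) (m : ℕ) (w : Idx m → ℝ) : ∃ p, T A m p = w := by
  refine ⟨tr (-A) (mk m fun i j => if h : i < m then if h' : j < m - i then
    w ⟨⟨i, h⟩, ⟨j, h'⟩⟩ else 0 else 0), ?_⟩
  ext ⟨i, j⟩
  have : i.1 + j.1 < m := by omega
  change coeff _ (tr A _) = _
  rw [tr_tr_neg, coeff_mk _ _ _ _ this]
  simp

end HS

namespace HS

/-- Π_n -/
noncomputable abbrev V (n : ℕ) : Submodule ℝ R := restrictTotalDegree (Fin 2) ℝ n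

lemma V_equiv (n : ℕ) : Nonempty (V n ≃ₗ[ℝ] (Idx (n+1) → ℝ)) := by
  refine ⟨LinearEquiv.ofBijective ((T 0 (n+1)).domRestrict (V n)) ⟨?_, ?_⟩⟩
  · rw [← LinearMap.ker_eq_bot, LinearMap.ker_eq_bot']
    rintro ⟨p, hp⟩ h
    rw [mem_restrictTotalDegree] at hp
    have h2 : p ∈ J 0 (n+1) := T_eq_zero.1 h
    rw [mem_J] at h2
    ext x
    simp only [ZeroMemClass.coe_zero, coeff_zero]
    by_cases hx : x.degree ≤ n
    · have := h2 (x 0) (x 1) (by rw [← mo_degree, mo_self]; omega)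
      rwa [tr_zero, mo_self] at this
    · apply coeff_eq_zero_of_totalDegree_lt
      change _ < x.degree
      omega
  · intro w
    refine ⟨⟨mk (n+1) fun i j => if h : i < n+1 then if h' : j < n+1 - i then
      w ⟨⟨i, h⟩, ⟨j, h'⟩⟩ else 0 else 0, ?_⟩, ?_⟩
    · rw [mem_restrictTotalDegree]; exact deg_mk _ _
    · ext ⟨i, j⟩
      have : i.1 + j.1 < n+1 := by omega
      change coeff _ (tr 0 _) = _
      rw [tr_zero]
      refine (coeff_mk _ _ _ _ this).trans ?_
      simp
      omega

instance (n : ℕ) : Module.Finite ℝ (V n) := by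
  obtain ⟨e⟩ := V_equiv n
  exact Module.Finite.equiv e.symm

lemma finrank_V (n : ℕ) : Module.finrank ℝ (V n) = (n + 2).choose 2 := by
  obtain ⟨e⟩ := V_equiv n
  rw [e.finrank_eq, Module.finrank_fintype_fun_eq_card, card_Idx]

/-- data space -/
abbrev W {s : ℕ} (m : Fin s → ℕ) := ∀ k, (Idx (m k) → ℝ)

lemma finrank_W {s : ℕ} (m : Fin s → ℕ) : Module.finrank ℝ (W m) = ∑ k, (m k + 1).choose 2 := by
  rw [Module.finrank_pi_fintype]
  simp only [Module.finrank_fintype_fun_eq_card, card_Idx]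

/-- evaluation map -/
noncomputable def E {s : ℕ} (A : Fin s → Fin 2 → ℝ) (m : Fin s → ℕ) : R →ₗ[ℝ] W m :=
  LinearMap.pi fun k => T (A k) (m k)

lemma E_eq_zero {s : ℕ} {A : Fin s → Fin 2 → ℝ} {m : Fin s → ℕ} {p : R} :
    E A m p = 0 ↔ ∀ k, p ∈ J (A k) (m k) := by
  simp only [← T_eq_zero]
  constructor
  · intro h k; exact congr_fun h k
  · intro h; funext k; exact h k

lemma Sol_mono {s : ℕ} {A : Fin s → Fin 2 → ℝ} {n : ℕ} {m m' : Fin s → ℕ} (h : Sol A n m)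
    (hm : ∀ k, m' k ≤ m k) : Sol A n m' := by
  intro f
  obtain ⟨p, hp, hp'⟩ := h f
  exact ⟨p, hp, fun k => J_mono (hm k) (hp' k)⟩

lemma Sol_surj {s : ℕ} {A : Fin s → Fin 2 → ℝ} {n : ℕ} {m : Fin s → ℕ} (h : Sol A n m)
    (w : W m) : ∃ p ∈ V n, E A m p = w := by
  choose f hf using fun k => T_surj (A k) (m k) (w k)
  obtain ⟨p, hp, hp'⟩ := h f
  refine ⟨p, (mem_restrictTotalDegree _ _ _).2 hp, ?_⟩
  funext k
  have := T_eq_zero.2 (hp' k)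
  rw [map_sub, hf, sub_eq_zero] at this
  exact this

lemma range_le {V1 V2 V3 : Type*} [AddCommGroup V1] [AddCommGroup V2] [AddCommGroup V3]
    [Module ℝ V1] [Module ℝ V2] [Module ℝ V3] [Module.Finite ℝ V2] (f : V1 →ₗ[ℝ] V2)
    (g : V1 →ₗ[ℝ] V3) (h : ∀ x, f x = 0 → g x = 0) :
    Module.finrank ℝ (LinearMap.range g) ≤ Module.finrank ℝ V2 := by
  have hk : LinearMap.ker f ≤ LinearMap.ker g := fun x hx => h x hx
  have h1 : LinearMap.range g = LinearMap.range ((LinearMap.ker f).liftQ g hk) := by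
    rw [Submodule.range_liftQ]
  have e := f.quotKerEquivRange
  have : Module.Finite ℝ (V1 ⧸ LinearMap.ker f) := Module.Finite.equiv e.symm
  rw [h1]
  refine (LinearMap.finrank_range_le _).trans ?_
  rw [e.finrank_eq]
  exact Submodule.finrank_le _

lemma nec {s : ℕ} {A : Fin s → Fin 2 → ℝ} {n d : ℕ} {m : Fin s → ℕ} {q : R} (hq0 : q ≠ 0)
    (hd : q.totalDegree = d) (hdn : d ≤ n) (hq : ∀ k, m k ≠ 0 → eval (A k) q = 0)
    (h : Sol A n m) :
    ∑ k, (m k + 1).choose 2 + (n - d + 2).choose 2 ≤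
      ∑ k, (m k - 1 + 1).choose 2 + (n + 2).choose 2 := by
  let g : R →ₗ[ℝ] W m := (E A m).comp (LinearMap.mulLeft ℝ q)
  have h1 : Module.finrank ℝ (LinearMap.range g) ≤ ∑ k, (m k - 1 + 1).choose 2 := by
    rw [← finrank_W]
    apply range_le (E A (fun k => m k - 1))
    intro x hx
    rw [E_eq_zero] at hx
    change E A m (q * x) = 0
    rw [E_eq_zero]
    intro k
    by_cases hk : m k = 0
    · rw [hk]; exact J_zero _ _
    · have := J_mul (J_one.2 (hq k hk)) (hx k)
      rwa [show 1 + (m k - 1) = m k by omega] at this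
  let φ : V n →ₗ[ℝ] (W m ⧸ LinearMap.range g) :=
    ((LinearMap.range g).mkQ.comp (E A m)).domRestrict (V n)
  have hs : LinearMap.range φ = ⊤ := by
    rw [LinearMap.range_eq_top]
    intro w
    obtain ⟨w, rfl⟩ := Submodule.mkQ_surjective _ w
    obtain ⟨p, hp, rfl⟩ := Sol_surj h w
    exact ⟨⟨p, hp⟩, rfl⟩
  have h2 := LinearMap.finrank_range_add_finrank_ker φ
  rw [hs, finrank_top, finrank_V] at h2
  have h3 := Submodule.finrank_quotient_add_finrank (LinearMap.range g)
  rw [finrank_W] at h3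
  have h4 : (n - d + 2).choose 2 ≤ Module.finrank ℝ (LinearMap.ker φ) := by
    rw [← finrank_V]
    have hmem : ∀ x ∈ V (n - d), q * x ∈ V n := by
      intro x hx
      rw [mem_restrictTotalDegree] at hx ⊢
      refine (totalDegree_mul _ _).trans ?_
      omega
    let ψ : V (n - d) →ₗ[ℝ] V n := (LinearMap.mulLeft ℝ q).restrict hmem
    have hψ : ∀ x, ψ x ∈ LinearMap.ker φ := by
      intro x
      rw [LinearMap.mem_ker]
      change (LinearMap.range g).mkQ (E A m (q * x)) = 0
      rw [Submodule.mkQ_apply, Submodule.Quotient.mk_eq_zero]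
      exact ⟨x, rfl⟩
    apply LinearMap.finrank_le_finrank_of_injective (f := ψ.codRestrict _ hψ)
    intro x y hxy
    have : q * x.1 = q * y.1 := congrArg (fun z => z.1.1) hxy
    exact Subtype.ext (mul_left_cancel₀ hq0 this)
  omega

lemma nec' {s : ℕ} {A : Fin s → Fin 2 → ℝ} {n d : ℕ} {m : Fin s → ℕ} {q : R} (hq0 : q ≠ 0)
    (hd : q.totalDegree = d) (hdn : d ≤ n) (h : Sol A n m) (S : Finset (Fin s))
    (hS : ∀ k ∈ S, eval (A k) q = 0) :
    ∑ k ∈ S, m k + (n - d + 2).choose 2 ≤ (n + 2).choose 2 := by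
  classical
  have := nec (m := fun k => if k ∈ S then m k else 0) hq0 hd hdn (by
    intro k hk; apply hS; by_contra hk'; simp [hk'] at hk) (Sol_mono h (by
    intro k; split_ifs <;> omega))
  have h2 : ∑ k, ((if k ∈ S then m k else 0) + 1).choose 2 = ∑ k, ((if k ∈ S then m k else 0) - 1 + 1).choose 2
    + ∑ k ∈ S, m k := by
    have h3 : ∑ k ∈ S, m k = ∑ k, if k ∈ S then m k else 0 := by simp
    rw [h3, ← Finset.sum_add_distrib]
    apply Finset.sum_congr rfl
    intro k _
    generalize (if k ∈ S then m k else 0) = a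
    cases a with
    | zero => simp
    | succ a => simp [Nat.choose_succ_succ' (a + 1) 1]; omega
  omega

end HS

namespace HS

lemma unit_mod {A : Fin 2 → ℝ} {q : R} (hq : eval A q ≠ 0) (f : R) (m : ℕ) :
    ∃ g, f - q * g ∈ J A m := by
  set c := eval A q with hc
  let w : R := 1 - C c⁻¹ * q
  have hw : eval A w = 0 := by
    simp only [w, map_sub, map_one, map_mul, eval_C, ← hc]
    field_simp; simp
  have h1 := J_pow hw m
  obtain ⟨u, hu⟩ := sub_dvd_pow_sub_pow 1 w m
  rw [one_pow] at hu
  refine ⟨C c⁻¹ * u * f, ?_⟩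
  have : f - q * (C c⁻¹ * u * f) = f * w ^ m := by
    have h2 : w ^ m = 1 - (1 - w) * u := by rw [← hu]; ring
    rw [h2]; simp only [w]; ring
  rw [this]
  exact Ideal.mul_mem_left _ _ h1

/-- line polynomial -/
noncomputable def ln (a b c : ℝ) : R := C a * X 0 + C b * X 1 + C c

lemma eval_ln (a b c : ℝ) (P : Fin 2 → ℝ) : eval P (ln a b c) = a * P 0 + b * P 1 + c := by
  simp [ln]

lemma deg_ln_le (a b c : ℝ) : (ln a b c).totalDegree ≤ 1 := by
  unfold ln
  refine (totalDegree_add _ _).trans (max_le ((totalDegree_add _ _).trans (max_le ?_ ?_)) ?_)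
  · refine (totalDegree_mul _ _).trans ?_; simp
  · refine (totalDegree_mul _ _).trans ?_; simp
  · simp

lemma deg_ln {a b c : ℝ} (h : a ^ 2 + b ^ 2 ≠ 0) : (ln a b c).totalDegree = 1 := by
  apply le_antisymm (deg_ln_le a b c)
  by_contra h1
  have h0 : (ln a b c).totalDegree = 0 := by omega
  rw [totalDegree_eq_zero_iff_eq_C] at h0
  have h2 := fun P => congrArg (eval P) h0
  simp only [eval_ln, eval_C] at h2
  have e0 := h2 ![0, 0]
  have e1 := h2 ![1, 0]
  have e2 := h2 ![0, 1]
  simp at e0 e1 e2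
  apply h
  have : a = 0 := by linarith
  have : b = 0 := by linarith
  subst_vars; simp

lemma ln_ne_zero {a b c : ℝ} (h : a ^ 2 + b ^ 2 ≠ 0) : ln a b c ≠ 0 := by
  intro h0
  have := deg_ln (c := c) h
  rw [h0] at this
  simp at this

lemma uni {ι : Type*} [Fintype ι] (t : ι → ℝ) (ht : Function.Injective t) (m : ι → ℕ) (n : ℕ)
    (hm : ∑ k, m k ≤ n + 1) (f : ι → Polynomial ℝ) :
    ∃ u : Polynomial ℝ, u.natDegree ≤ n ∧
      ∀ k, (Polynomial.X - Polynomial.C (t k)) ^ (m k) ∣ u - f k := by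
  classical
  obtain ⟨r, hr⟩ := Ideal.exists_forall_sub_mem_ideal
    (I := fun k => Ideal.span {(Polynomial.X - Polynomial.C (t k)) ^ (m k)}) (by
      intro i j hij
      change IsCoprime (Ideal.span _) (Ideal.span _)
      rw [Ideal.isCoprime_span_singleton_iff]
      exact (Polynomial.pairwise_coprime_X_sub_C ht hij).pow) f
  let D : Polynomial ℝ := ∏ k, (Polynomial.X - Polynomial.C (t k)) ^ (m k)
  have hD : D.Monic := Polynomial.monic_prod_of_monic _ _ fun k _ => (Polynomial.monic_X_sub_C _).pow _
  have hdeg : D.natDegree = ∑ k, m k := by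
    simp only [D]
    rw [Polynomial.natDegree_prod_of_monic _ _ fun k _ => (Polynomial.monic_X_sub_C _).pow _]
    simp
  refine ⟨r %ₘ D, ?_, ?_⟩
  · by_cases h1 : D = 1
    · rw [h1]; simp
    · have := Polynomial.natDegree_modByMonic_lt r hD h1
      omega
  · intro k
    have h1 := Ideal.mem_span_singleton.1 (hr k)
    have h2 : (Polynomial.X - Polynomial.C (t k)) ^ (m k) ∣ D := Finset.dvd_prod_of_mem _ (Finset.mem_univ k)
    have h3 : r %ₘ D - f k = (r - f k) - D * (r /ₘ D) := by
      rw [Polynomial.modByMonic_eq_sub_mul_div]; ring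
    rw [h3]
    exact dvd_sub h1 (h2.mul_right _)

lemma deg_aeval (τ : R) (hτ : τ.totalDegree ≤ 1) (u : Polynomial ℝ) :
    (Polynomial.aeval τ u).totalDegree ≤ u.natDegree := by
  rw [Polynomial.aeval_eq_sum_range]
  apply totalDegree_finsetSum_le
  intro i hi
  refine (totalDegree_smul_le _ _).trans ((totalDegree_pow _ _).trans ?_)
  simp at hi
  nlinarith

lemma line_lift {a b c : ℝ} (h : a ^ 2 + b ^ 2 ≠ 0) :
    ∃ (τ : R) (φ : R →ₐ[ℝ] Polynomial ℝ), τ.totalDegree ≤ 1 ∧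
      (∀ f, ln a b c ∣ f - Polynomial.aeval τ (φ f)) ∧
      (∀ P Q, eval P (ln a b c) = 0 → eval Q (ln a b c) = 0 → eval P τ = eval Q τ → P = Q) := by
  set N := a ^ 2 + b ^ 2 with hN
  let τ : R := ln (b / N) (-a / N) 0
  let φ : R →ₐ[ℝ] Polynomial ℝ := aeval ![Polynomial.C (-c * a / N) + Polynomial.C b * Polynomial.X,
    Polynomial.C (-c * b / N) - Polynomial.C a * Polynomial.X]
  refine ⟨τ, φ, deg_ln_le _ _ _, ?_, ?_⟩
  · intro f
    have key : (Ideal.Quotient.mkₐ ℝ (Ideal.span {ln a b c})) =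
        (Ideal.Quotient.mkₐ ℝ (Ideal.span {ln a b c})).comp ((Polynomial.aeval τ).comp φ) := by
      apply MvPolynomial.algHom_ext
      intro i
      simp only [AlgHom.comp_apply, Ideal.Quotient.mkₐ_eq_mk]
      rw [Ideal.Quotient.eq, Ideal.mem_span_singleton]
      fin_cases i
      · refine ⟨C (a / N), ?_⟩
        simp [φ, τ]
        apply MvPolynomial.funext
        intro P
        simp [eval_ln]
        field_simp
        rw [hN]; ring
      · refine ⟨C (b / N), ?_⟩
        simp [φ, τ]
        apply MvPolynomial.funext
        intro P
        simp [eval_ln]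
        field_simp
        rw [hN]; ring
    have := DFunLike.congr_fun key f
    simp only [AlgHom.comp_apply, Ideal.Quotient.mkₐ_eq_mk] at this
    rwa [Ideal.Quotient.eq, Ideal.mem_span_singleton] at this
  · intro P Q hP hQ hPQ
    simp only [τ, eval_ln] at hP hQ hPQ
    field_simp at hPQ
    have e0 : N * (P 0 - Q 0) = 0 := by
      rw [hN]; linear_combination a * (hP - hQ) + b * hPQ
    have e1 : N * (P 1 - Q 1) = 0 := by
      rw [hN]; linear_combination b * (hP - hQ) - a * hPQ
    have e0 := (mul_eq_zero.1 e0).resolve_left h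
    have e1 := (mul_eq_zero.1 e1).resolve_left h
    ext i
    fin_cases i
    · simp; linarith
    · simp; linarith

open scoped Classical in
lemma line_step {s : ℕ} {A : Fin s → Fin 2 → ℝ} (hA : Function.Injective A) {n : ℕ} {m : Fin s → ℕ}
    {a b c : ℝ} (h : a ^ 2 + b ^ 2 ≠ 0)
    (hm : ∑ k ∈ Finset.univ.filter (fun k => eval (A k) (ln a b c) = 0), m k ≤ n + 2)
    (hs : Sol A n (fun k => if eval (A k) (ln a b c) = 0 then m k - 1 else m k)) :
    Sol A (n + 1) m := by
  intro f
  obtain ⟨τ, φ, hτ, hφ, hinj⟩ := line_lift (c := c) h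
  obtain ⟨u, hu, hu'⟩ := uni (ι := {k // eval (A k) (ln a b c) = 0}) (fun k => eval (A k) τ)
    (by intro x y hxy; exact Subtype.ext (hA (hinj _ _ x.2 y.2 hxy))) (fun k => m k) (n + 1)
    (by rw [Finset.sum_subtype (Finset.univ.filter (fun k => eval (A k) (ln a b c) = 0))
          (p := fun k => eval (A k) (ln a b c) = 0) (by simp)] at hm; exact hm)
    (fun k => φ (f k))
  let p1 : R := Polynomial.aeval τ u
  have hp1 : p1.totalDegree ≤ n + 1 := (deg_aeval τ hτ u).trans hu
  have hg : ∀ k, ∃ g, f k - p1 - ln a b c * g ∈ J (A k) (m k) := by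
    intro k
    by_cases hk : eval (A k) (ln a b c) = 0
    · obtain ⟨g, hg⟩ := hφ (f k)
      obtain ⟨v, hv⟩ := hu' ⟨k, hk⟩
      refine ⟨g, ?_⟩
      have hv2 := congrArg (Polynomial.aeval τ) hv
      simp only [map_sub, map_mul, map_pow, Polynomial.aeval_X, Polynomial.aeval_C] at hv2
      have : f k - p1 - ln a b c * g =
          -((τ - algebraMap ℝ R (eval (A k) τ)) ^ m k * Polynomial.aeval τ v) := by
        rw [← hv2, ← hg]; simp only [p1]; ring
      rw [this]
      apply Submodule.neg_mem
      apply Ideal.mul_mem_right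
      apply J_pow
      simp [MvPolynomial.algebraMap_eq]
    · exact unit_mod hk _ _
  choose g hg using hg
  obtain ⟨r, hr, hr'⟩ := hs g
  refine ⟨p1 + ln a b c * r, ?_, ?_⟩
  · refine (totalDegree_add _ _).trans (max_le hp1 ((totalDegree_mul _ _).trans ?_))
    have := deg_ln_le a b c
    omega
  · intro k
    have : p1 + ln a b c * r - f k = ln a b c * (r - g k) - (f k - p1 - ln a b c * g k) := by ring
    rw [this]
    apply Submodule.sub_mem _ _ (hg k)
    have h1 := hr' k
    beta_reduce at h1
    by_cases hk : eval (A k) (ln a b c) = 0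
    · rw [if_pos hk] at h1
      exact J_mono (by omega) (J_mul (J_one.2 hk) h1)
    · rw [if_neg hk] at h1
      exact Ideal.mul_mem_left _ _ h1

lemma conic_step {s : ℕ} {A : Fin s → Fin 2 → ℝ} {n : ℕ} {m m1 m2 : Fin s → ℕ} {q : R}
    (hq : q.totalDegree ≤ 2) (j : Fin s) (hj : eval (A j) q ≠ 0)
    (h1 : Sol A (n + 2) m1) (h1' : ∀ k, k ≠ j → m k ≤ m1 k)
    (h2 : Sol A n m2) (h2' : ∀ k, m k ≤ m2 k ∨ (eval (A k) q = 0 ∧ m k ≤ m2 k + 1)) :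
    Sol A (n + 2) m := by
  classical
  intro f
  obtain ⟨p0, hp0, hp0'⟩ := h1 f
  obtain ⟨g, hg⟩ := unit_mod hj (f j - p0) (m j)
  obtain ⟨r, hr, hr'⟩ := h2 (fun k => if k = j then g else 0)
  refine ⟨p0 + q * r, ?_, ?_⟩
  · refine (totalDegree_add _ _).trans (max_le hp0 ((totalDegree_mul _ _).trans ?_))
    omega
  · intro k
    have hk := hr' k
    have hqr : q * (r - if k = j then g else 0) ∈ J (A k) (m k) := by
      rcases h2' k with h | ⟨h, h'⟩
      · exact Ideal.mul_mem_left _ _ (J_mono h hk)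
      · exact J_mono (by omega) (J_mul (J_one.2 h) hk)
    by_cases hkj : k = j
    · subst hkj
      rw [if_pos rfl] at hqr
      have : p0 + q * r - f k = q * (r - g) - (f k - p0 - q * g) := by ring
      rw [this]
      exact Submodule.sub_mem _ hqr hg
    · rw [if_neg hkj, sub_zero] at hqr
      have : p0 + q * r - f k = (p0 - f k) + q * r := by ring
      rw [this]
      exact Submodule.add_mem _ (J_mono (h1' k hkj) (hp0' k)) hqr

lemma conic_exists {s : ℕ} (A : Fin s → Fin 2 → ℝ) (F : Finset (Fin s)) (hF : F.card ≤ 5) :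
    ∃ q : R, q ≠ 0 ∧ q.totalDegree = 2 ∧ ∀ i ∈ F, eval (A i) q = 0 := by
  let L : V 2 →ₗ[ℝ] (F → ℝ) :=
    LinearMap.pi fun i => (aeval (A i)).toLinearMap.domRestrict (V 2)
  have : LinearMap.ker L ≠ ⊥ := by
    apply LinearMap.ker_ne_bot_of_finrank_lt
    have h6 : (2 + 2).choose 2 = 6 := by decide
    rw [finrank_V, Module.finrank_fintype_fun_eq_card, Fintype.card_coe, h6]
    omega
  obtain ⟨⟨q, hq⟩, hq1, hq2⟩ := (Submodule.ne_bot_iff _).1 this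
  rw [mem_restrictTotalDegree] at hq
  have hq0 : q ≠ 0 := fun h => hq2 (Subtype.ext h)
  refine ⟨q * X 0 ^ (2 - q.totalDegree), mul_ne_zero hq0 (pow_ne_zero _ (X_ne_zero _)), ?_, ?_⟩
  · rw [totalDegree_mul_of_isDomain hq0 (pow_ne_zero _ (X_ne_zero _)), totalDegree_X_pow]
    omega
  · intro i hi
    have : aeval (A i) q = 0 := congr_fun hq1 ⟨i, hi⟩
    rw [map_mul, ← MvPolynomial.coe_aeval_eq_eval]
    change aeval (A i) q * _ = 0
    rw [this, zero_mul]

end HS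

namespace HS

open scoped Classical in
/-- the set of nodes on some line -/
def IsL {s : ℕ} (A : Fin s → Fin 2 → ℝ) (S : Finset (Fin s)) : Prop :=
  ∃ a b c : ℝ, a ^ 2 + b ^ 2 ≠ 0 ∧ S = Finset.univ.filter (fun k => eval (A k) (ln a b c) = 0)

/-- reduced multiplicities -/
def red {s : ℕ} (S : Finset (Fin s)) (m : Fin s → ℕ) : Fin s → ℕ :=
  fun k => if k ∈ S then m k - 1 else m k

lemma isL_two {s : ℕ} {A : Fin s → Fin 2 → ℝ} (hA : Function.Injective A) {i j : Fin s}
    (h : i ≠ j) : ∃ S, IsL A S ∧ i ∈ S ∧ j ∈ S := by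
  classical
  refine ⟨_, ⟨A i 1 - A j 1, A j 0 - A i 0, A i 0 * A j 1 - A j 0 * A i 1, ?_, rfl⟩, ?_, ?_⟩
  · intro h0
    apply h
    apply hA
    have h1 : A i 1 - A j 1 = 0 := by nlinarith
    have h2 : A j 0 - A i 0 = 0 := by nlinarith
    ext x
    fin_cases x
    · simp; linarith
    · simp; linarith
  · simp [eval_ln]; ring
  · simp [eval_ln]; ring

lemma isL_one {s : ℕ} (A : Fin s → Fin 2 → ℝ) (i : Fin s) : ∃ S, IsL A S ∧ i ∈ S := by
  classical
  refine ⟨_, ⟨1, 0, - A i 0, by norm_num, rfl⟩, ?_⟩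
  simp [eval_ln]

lemma isL_step {s : ℕ} {A : Fin s → Fin 2 → ℝ} (hA : Function.Injective A) {n : ℕ}
    {m : Fin s → ℕ} {S : Finset (Fin s)} (hS : IsL A S) (hm : ∑ k ∈ S, m k ≤ n + 2)
    (h : Sol A n (red S m)) : Sol A (n + 1) m := by
  classical
  obtain ⟨a, b, c, h0, rfl⟩ := hS
  apply line_step hA h0 (c := c)
  · convert hm
  · convert h using 2
    simp [red]

lemma red_sum {s : ℕ} (S T : Finset (Fin s)) (m : Fin s → ℕ) :
    ∑ k ∈ T, red S m k + ((T ∩ S).filter (fun k => 0 < m k)).card = ∑ k ∈ T, m k := by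
  rw [Finset.card_filter, ← Finset.sum_filter_add_sum_filter_not T (· ∈ S) (red S m),
    ← Finset.sum_filter_add_sum_filter_not T (· ∈ S) m, Finset.filter_mem_eq_inter]
  have h1 : ∑ k ∈ T with k ∉ S, red S m k = ∑ k ∈ T with k ∉ S, m k := by
    apply Finset.sum_congr rfl
    intro k hk
    simp only [Finset.mem_filter] at hk
    simp [red, hk.2]
  rw [h1, add_right_comm, ← Finset.sum_add_distrib]
  congr 1
  apply Finset.sum_congr rfl
  intro k hk
  simp only [Finset.mem_inter] at hk
  simp only [red, hk.2, if_true]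
  split_ifs <;> omega

lemma sum_two {s : ℕ} (S : Finset (Fin s)) (m : Fin s → ℕ) {i j : Fin s} (h : i ≠ j) (hi : i ∈ S)
    (hj : j ∈ S) : m i + m j ≤ ∑ k ∈ S, m k := by
  rw [← Finset.sum_pair h]
  apply Finset.sum_le_sum_of_subset
  intro x hx
  simp at hx
  rcases hx with rfl | rfl <;> assumption

lemma sum_filter_pos {s : ℕ} (S : Finset (Fin s)) (m : Fin s → ℕ) :
    ∑ k ∈ S.filter (fun k => 0 < m k), m k = ∑ k ∈ S, m k := by
  rw [Finset.sum_filter]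
  apply Finset.sum_congr rfl
  intro k _
  split_ifs <;> omega

/-- On a line with more than... the support on a full line has at least two elements. -/
lemma full_two {s : ℕ} {A : Fin s → Fin 2 → ℝ} (hA : Function.Injective A) {n : ℕ}
    {m : Fin s → ℕ} (hL : ∀ S, IsL A S → ∑ k ∈ S, m k ≤ n + 2) {S : Finset (Fin s)}
    (hS : ∑ k ∈ S, m k = n + 2) (hx : ∀ x, ∃ y, y ≠ x ∧ 0 < m y) :
    2 ≤ (S.filter (fun k => 0 < m k)).card := by
  by_contra hlt
  have hsum := sum_filter_pos S m
  have h1 : (S.filter (fun k => 0 < m k)).card = 0 ∨ (S.filter (fun k => 0 < m k)).card = 1 := by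
    omega
  rcases h1 with h1 | h1
  · rw [Finset.card_eq_zero] at h1
    rw [h1] at hsum
    simp at hsum; omega
  · obtain ⟨x, hx1⟩ := Finset.card_eq_one.1 h1
    rw [hx1, Finset.sum_singleton] at hsum
    obtain ⟨y, hy, hy2⟩ := hx x
    obtain ⟨S', hS', h2, h3⟩ := isL_two hA hy
    have := sum_two S' m hy h2 h3
    have := hL S' hS'
    omega

lemma meet {s : ℕ} {m : Fin s → ℕ} {S T : Finset (Fin s)} (h : ∑ k, m k < ∑ k ∈ S, m k + ∑ k ∈ T, m k) :
    0 < ((T ∩ S).filter (fun k => 0 < m k)).card := by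
  rw [Nat.pos_iff_ne_zero]
  intro h0
  have h1 := sum_filter_pos (T ∩ S) m
  rw [Finset.card_eq_zero] at h0
  rw [h0, Finset.sum_empty] at h1
  have h2 := Finset.sum_union_inter (s₁ := T) (s₂ := S) (f := m)
  have h3 : ∑ k ∈ T ∪ S, m k ≤ ∑ k, m k := Finset.sum_le_sum_of_subset (Finset.subset_univ _)
  omega

lemma case1 {s : ℕ} {A : Fin s → Fin 2 → ℝ} (hA : Function.Injective A) (n : ℕ) :
    ∀ m : Fin s → ℕ, ∑ k, m k ≤ 2 * n + 1 → (∀ S, IsL A S → ∑ k ∈ S, m k ≤ n + 1) → Sol A n m := by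
  induction n with
  | zero =>
    intro m hm _ f
    by_cases h : ∃ i, 0 < m i
    · obtain ⟨i, hi⟩ := h
      refine ⟨C (eval (A i) (f i)), by simp, fun k => ?_⟩
      by_cases hk : k = i
      · subst hk
        have : m k ≤ ∑ k, m k := Finset.single_le_sum (f := m) (by simp) (Finset.mem_univ k)
        apply J_mono (m' := 1) (by omega)
        rw [J_one]; simp
      · have := sum_two Finset.univ m hk (Finset.mem_univ _) (Finset.mem_univ _)
        rw [show m k = 0 by omega]
        exact J_zero _ _
    · push Not at h
      refine ⟨0, by simp, fun k => ?_⟩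
      rw [show m k = 0 by have := h k; omega]
      exact J_zero _ _
  | succ n ih =>
    intro m hm hL
    by_cases h0 : ∀ i, m i = 0
    · intro f
      refine ⟨0, by simp, fun k => ?_⟩
      rw [h0 k]
      exact J_zero _ _
    push Not at h0
    obtain ⟨i, hi⟩ := h0
    -- enough
    have key : ∀ S, IsL A S → 2 ≤ (S.filter (fun k => 0 < m k)).card →
        (∀ T, IsL A T → ∑ k ∈ T, red S m k ≤ n + 1) → Sol A (n + 1) m := by
      intro S hS h2 hT
      apply isL_step hA hS (hL S hS)
      apply ih _ _ hT
      have := red_sum S Finset.univ m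
      rw [Finset.univ_inter] at this
      omega
    by_cases h2 : ∀ x, ∃ y, y ≠ x ∧ 0 < m y
    · by_cases h3 : ∃ S, IsL A S ∧ ∑ k ∈ S, m k = n + 2
      · obtain ⟨S, hS, hS2⟩ := h3
        apply key S hS (full_two hA hL hS2 h2)
        intro T hT
        have e1 := red_sum S T m
        have e2 := hL T hT
        by_cases e3 : ∑ k ∈ T, m k = n + 2
        · have := meet (m := m) (S := S) (T := T) (by omega)
          omega
        · omega
      · push Not at h3
        obtain ⟨j, hj, hj2⟩ := h2 i
        obtain ⟨S, hS, h4, h5⟩ := isL_two hA hj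
        apply key S hS
        · have : ({j, i} : Finset (Fin s)) ⊆ S.filter (fun k => 0 < m k) := by
            intro x hx
            simp at hx
            rcases hx with rfl | rfl <;> simp <;> constructor <;> first | assumption | omega
          have := Finset.card_le_card this
          rwa [Finset.card_pair hj] at this
        · intro T hT
          have e1 := red_sum S T m
          have e2 := hL T hT
          have := h3 T hT
          omega
    · push Not at h2
      obtain ⟨x, hx⟩ := h2
      have hix : i = x := by
        by_contra hne
        have := hx i hne
        omega
      subst hix
      obtain ⟨S, hS, hiS⟩ := isL_one A i
      have hsum : ∑ k, m k = m i := by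
        apply Finset.sum_eq_single i
        · intro b _ hb; have := hx b hb; omega
        · simp
      have e0 : m i ≤ ∑ k ∈ S, m k := Finset.single_le_sum (f := m) (by simp) hiS
      have e1 := hL S hS
      have e2 := red_sum S Finset.univ m
      rw [Finset.univ_inter] at e2
      have e3 : 0 < (S.filter (fun k => 0 < m k)).card := by
        apply Finset.card_pos.2
        exact ⟨i, by simp [hiS]; omega⟩
      apply isL_step hA hS e1
      apply ih
      · omega
      · intro T hT
        have : ∑ k ∈ T, red S m k ≤ ∑ k, red S m k := Finset.sum_le_sum_of_subset (Finset.subset_univ _)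
        omega

lemma top {s : ℕ} (m : Fin s → ℕ) (c : ℕ) (hc : c ≤ s) :
    ∃ F : Finset (Fin s), F.card = c ∧ ∀ x ∈ F, ∀ y ∉ F, m y ≤ m x := by
  induction c with
  | zero => exact ⟨∅, by simp⟩
  | succ c ih =>
    obtain ⟨F, hF, hF2⟩ := ih (by omega)
    have hne : (Fᶜ).Nonempty := by
      rw [← Finset.card_pos, Finset.card_compl, Fintype.card_fin]; omega
    obtain ⟨z, hz, hz2⟩ := Finset.exists_max_image Fᶜ m hne
    have hz' : z ∉ F := by simpa using hz
    refine ⟨insert z F, by rw [Finset.card_insert_of_notMem hz', hF], ?_⟩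
    intro x hx y hy
    simp only [Finset.mem_insert, not_or] at hx hy
    rcases hx with rfl | hx
    · exact hz2 y (by simp [hy.2])
    · exact hF2 x hx y hy.2

lemma ch (a : ℕ) : (a + 1).choose 2 = a.choose 2 + a := by
  rw [Nat.choose_succ_succ' a 1]; simp; omega

lemma le_ch (a : ℕ) : a ≤ (a + 1).choose 2 := by rw [ch]; omega

lemma red_ch {s : ℕ} (S : Finset (Fin s)) (m : Fin s → ℕ) :
    ∑ k, (red S m k + 1).choose 2 + ∑ k ∈ S, m k = ∑ k, (m k + 1).choose 2 := by
  have h3 : ∑ k ∈ S, m k = ∑ k, if k ∈ S then m k else 0 := by simp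
  rw [h3, ← Finset.sum_add_distrib]
  apply Finset.sum_congr rfl
  intro k _
  unfold red
  split_ifs with h
  · rw [ch (m k)]
    rcases Nat.eq_zero_or_pos (m k) with h0 | h0
    · simp [h0]
    · rw [Nat.sub_add_cancel h0]
  · simp

lemma case2 {s : ℕ} {A : Fin s → Fin 2 → ℝ} (hA : Function.Injective A) (n : ℕ) :
    ∀ m : Fin s → ℕ, ∑ k, m k = 2 * n + 2 → (∀ S, IsL A S → ∑ k ∈ S, m k ≤ n + 1) →
      ∑ k, (m k + 1).choose 2 ≤ (n + 2).choose 2 →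
      (∀ q : R, q ≠ 0 → q.totalDegree = 2 → ∃ k, 0 < m k ∧ eval (A k) q ≠ 0) → Sol A n m := by
  induction n with
  | zero =>
    intro m hm _ hc _
    have : ∑ k, m k ≤ ∑ k, (m k + 1).choose 2 := Finset.sum_le_sum fun k _ => le_ch _
    simp at hc hm
    omega
  | succ n ih =>
    intro m hm hL hC hq
    have houtside : ∀ S T, IsL A S → IsL A T → ∃ k, 0 < m k ∧ k ∉ S ∧ k ∉ T := by
      rintro S T ⟨a, b, c, h, rfl⟩ ⟨a', b', c', h', rfl⟩
      obtain ⟨k, hk, hk2⟩ := hq (ln a b c * ln a' b' c') (mul_ne_zero (ln_ne_zero h) (ln_ne_zero h'))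
        (by rw [totalDegree_mul_of_isDomain (ln_ne_zero h) (ln_ne_zero h'), deg_ln h, deg_ln h'])
      rw [map_mul] at hk2
      exact ⟨k, hk, by simpa using left_ne_zero_of_mul hk2, by simpa using right_ne_zero_of_mul hk2⟩
    have hx : ∀ x, ∃ y, y ≠ x ∧ 0 < m y := by
      intro x
      obtain ⟨S, hS, hxS⟩ := isL_one A x
      obtain ⟨k, hk, hk2, _⟩ := houtside S S hS hS
      exact ⟨k, by rintro rfl; exact hk2 hxS, hk⟩
    have key3 : ∀ S, IsL A S → 3 ≤ (S.filter (fun k => 0 < m k)).card →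
        (∀ T, IsL A T → ∑ k ∈ T, red S m k ≤ n + 1) → Sol A (n + 1) m := by
      intro S hS h2 hT
      apply isL_step hA hS (hL S hS)
      apply case1 hA _ _ _ hT
      have := red_sum S Finset.univ m
      rw [Finset.univ_inter] at this
      omega
    by_cases hA1 : ∃ S, IsL A S ∧ ∑ k ∈ S, m k = n + 2
    · obtain ⟨S, hS, hS2⟩ := hA1
      have hT : ∀ T, IsL A T → ∑ k ∈ T, red S m k ≤ n + 1 := by
        intro T hT
        have e1 := red_sum S T m
        have e2 := hL T hT
        by_cases e3 : ∑ k ∈ T, m k = n + 2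
        · suffices 0 < ((T ∩ S).filter (fun k => 0 < m k)).card by omega
          rw [Nat.pos_iff_ne_zero]
          intro h0
          have h1 := sum_filter_pos (T ∩ S) m
          rw [Finset.card_eq_zero] at h0
          rw [h0, Finset.sum_empty] at h1
          have h2 := Finset.sum_union_inter (s₁ := T) (s₂ := S) (f := m)
          obtain ⟨k, hk, hkS, hkT⟩ := houtside S T hS hT
          have h3 : ∑ k ∈ insert k (T ∪ S), m k ≤ ∑ k, m k :=
            Finset.sum_le_sum_of_subset (Finset.subset_univ _)
          rw [Finset.sum_insert (by simp [hkS, hkT])] at h3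
          omega
        · omega
      by_cases h3 : 3 ≤ (S.filter (fun k => 0 < m k)).card
      · exact key3 S hS h3 hT
      have h2 := full_two hA hL hS2 hx
      have hcard : (S.filter (fun k => 0 < m k)).card = 2 := by omega
      have hge : ∀ k ∈ S, 0 < m k → 2 ≤ m k := by
        intro x hxS hx0
        by_contra hlt
        have hx1 : m x = 1 := by omega
        have hxmem : x ∈ S.filter (fun k => 0 < m k) := by simp [hxS, hx0]
        have hc1 : ((S.filter (fun k => 0 < m k)).erase x).card = 1 := by
          rw [Finset.card_erase_of_mem hxmem, hcard]
        obtain ⟨y, hy⟩ := Finset.card_eq_one.1 hc1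
        have e1 := Finset.add_sum_erase _ m hxmem
        rw [hy, Finset.sum_singleton, sum_filter_pos, hS2, hx1] at e1
        have hy1 : m y = n + 1 := by omega
        have e2 := Finset.add_sum_erase Finset.univ m (Finset.mem_univ y)
        have e3 := Finset.add_sum_erase Finset.univ (fun k => (m k + 1).choose 2) (Finset.mem_univ y)
        have e4 : ∑ k ∈ Finset.univ.erase y, m k ≤ ∑ k ∈ Finset.univ.erase y, (m k + 1).choose 2 :=
          Finset.sum_le_sum fun k _ => le_ch _
        simp only [hy1] at e2 e3
        have e5 := ch (n + 2)
        simp only [show n + 1 + 1 = n + 2 by rfl, show n + 1 + 2 = n + 2 + 1 by rfl] at *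
        omega
      apply isL_step hA hS (hL S hS)
      apply ih _ _ hT
      · have e1 := red_ch S m
        have e5 := ch (n + 2)
        simp only [show n + 1 + 1 = n + 2 by rfl, show n + 1 + 2 = n + 2 + 1 by rfl] at *
        omega
      · intro q hq0 hq1
        obtain ⟨k, hk, hk2⟩ := hq q hq0 hq1
        refine ⟨k, ?_, hk2⟩
        unfold red
        split_ifs with h
        · have := hge k h hk; omega
        · exact hk
      · have := red_sum S Finset.univ m
        rw [Finset.univ_inter] at this
        omega
    · push Not at hA1
      have hL' : ∀ S, IsL A S → ∑ k ∈ S, m k ≤ n + 1 := by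
        intro S hS
        have := hL S hS
        have := hA1 S hS
        omega
      by_cases hB : ∃ S, IsL A S ∧ 3 ≤ (S.filter (fun k => 0 < m k)).card
      · obtain ⟨S, hS, h3⟩ := hB
        apply key3 S hS h3
        intro T hT
        have := red_sum S T m
        have := hL' T hT
        omega
      push Not at hB
      have hs5 : 5 ≤ s := by
        by_contra hlt
        obtain ⟨q, hq0, hq1, hq2⟩ := conic_exists A Finset.univ (by simp; omega)
        obtain ⟨k, _, hk⟩ := hq q hq0 hq1
        exact hk (hq2 k (Finset.mem_univ k))
      obtain ⟨F, hF, hF2⟩ := top m 5 hs5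
      obtain ⟨q, hq0, hq1, hq2⟩ := conic_exists A F (by omega)
      obtain ⟨j, hj0, hj⟩ := hq q hq0 hq1
      have hjF : j ∉ F := fun h => hj (hq2 j h)
      have hFpos : ∀ x ∈ F, 0 < m x := fun x hx => lt_of_lt_of_le hj0 (hF2 x hx j hjF)
      have hFsum : ∀ y ∉ F, 5 * m y ≤ ∑ k ∈ F, m k := by
        intro y hy
        have := Finset.card_nsmul_le_sum F m (m y) (fun x hx => hF2 x hx y hy)
        rwa [hF, smul_eq_mul] at this
      have htot : ∀ y ∉ F, ∑ k ∈ F, m k + m y ≤ 2 * (n + 1) + 2 := by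
        intro y hy
        rw [← hm, add_comm, ← Finset.sum_insert hy]
        exact Finset.sum_le_sum_of_subset (Finset.subset_univ _)
      have htot2 : ∀ y ∉ F, ∀ z ∉ F, y ≠ z → ∑ k ∈ F, m k + m y + m z ≤ 2 * (n + 1) + 2 := by
        intro y hy z hz hyz
        have : ∑ k ∈ insert z (insert y F), m k ≤ ∑ k, m k :=
          Finset.sum_le_sum_of_subset (Finset.subset_univ _)
        rw [Finset.sum_insert (by simp [hz, hyz.symm]), Finset.sum_insert hy] at this
        omega
      have hn : 1 ≤ n := by
        have := hFsum j hjF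
        have := htot j hjF
        omega
      obtain ⟨n', rfl⟩ : ∃ n', n = n' + 1 := ⟨n - 1, by omega⟩
      have hm1 : ∀ T : Finset (Fin s), ∑ k ∈ T, (if k = j then 0 else m k) ≤ ∑ k ∈ T, m k := by
        intro T
        apply Finset.sum_le_sum
        intro k _; split_ifs <;> omega
      refine conic_step (q := q) (m1 := fun k => if k = j then 0 else m k) (m2 := red F m)
        (by omega) j hj ?_ ?_ ?_ ?_
      · apply case1 hA
        · have : ∑ k, (if k = j then 0 else m k) < ∑ k, m k := by
            apply Finset.sum_lt_sum
            · intro k _; split_ifs <;> omega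
            · exact ⟨j, Finset.mem_univ j, by simp [hj0]⟩
          omega
        · intro T hT
          exact (hm1 T).trans (hL T hT)
      · intro k hk; simp [hk]
      · apply case1 hA
        · have := red_sum F Finset.univ m
          rw [Finset.univ_inter, Finset.filter_true_of_mem hFpos, hF] at this
          omega
        · intro T hT
          have e1 := red_sum F T m
          have e2 := hL' T hT
          by_contra hcon
          have e3 : ((T ∩ F).filter (fun k => 0 < m k)).card = 0 := by omega
          have e4 : ∑ k ∈ T, m k = n' + 2 := by omega
          have hdisj : ∀ k ∈ T, k ∉ F := by
            intro k hk hkF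
            rw [Finset.card_eq_zero] at e3
            have : k ∈ (T ∩ F).filter (fun k => 0 < m k) := by simp [hk, hkF, hFpos k hkF]
            rw [e3] at this
            simp at this
          have e5 := full_two hA hL' e4 hx
          have e6 := hB T hT
          have e7 : (T.filter (fun k => 0 < m k)).card = 2 := by omega
          obtain ⟨x, y, hxy, hxy2⟩ := Finset.card_eq_two.1 e7
          have hxT : x ∈ T := by
            have : x ∈ T.filter (fun k => 0 < m k) := by rw [hxy2]; simp
            exact (Finset.mem_filter.1 this).1
          have hyT : y ∈ T := by
            have : y ∈ T.filter (fun k => 0 < m k) := by rw [hxy2]; simp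
            exact (Finset.mem_filter.1 this).1
          have e8 := sum_filter_pos T m
          rw [hxy2, Finset.sum_pair hxy] at e8
          have := hFsum x (hdisj x hxT)
          have := hFsum y (hdisj y hyT)
          have := htot2 x (hdisj x hxT) y (hdisj y hyT) hxy
          omega
      · intro k
        by_cases hk : k ∈ F
        · right
          refine ⟨hq2 k hk, ?_⟩
          simp [red, hk]; omega
        · left; simp [red, hk]

end HS

open scoped Classical in
theorem stmt_0 (n s : ℕ) (hn : 1 ≤ n) (nk : Fin s → ℕ) (hnk : ∀ k, 1 ≤ nk k)
    (A : Fin s → Fin 2 → ℝ) (hA : Function.Injective A)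
    (hscheme : ∑ k, Nat.choose (nk k + 1) 2 ≤ Nat.choose (n + 2) 2)
    (hsum : ∑ k, nk k ≤ 2 * n + 2) :
    HermiteSolvable n s nk A ↔
      ((∀ ℓ : MvPolynomial (Fin 2) ℝ, ℓ ≠ 0 → ℓ.totalDegree = 1 →
          ∑ k ∈ Finset.univ.filter fun k => eval (A k) ℓ = 0, nk k ≤ n + 1) ∧
       (∀ β : MvPolynomial (Fin 2) ℝ, β ≠ 0 → β.totalDegree = 2 →
          ∑ k ∈ Finset.univ.filter fun k => eval (A k) β = 0, nk k ≤ 2 * n + 1)) := by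
  rw [HS.hermite_iff]
  constructor
  · intro h
    constructor
    · intro l hl hd
      have := HS.nec' hl hd hn h (Finset.univ.filter fun k => eval (A k) l = 0) (by simp)
      have e1 := HS.ch (n + 1)
      rw [show n - 1 + 2 = n + 1 by omega] at this
      simp only [show n + 1 + 1 = n + 2 by rfl] at *
      omega
    · intro q hq hd
      by_cases hn2 : 2 ≤ n
      · have := HS.nec' hq hd hn2 h (Finset.univ.filter fun k => eval (A k) q = 0) (by simp)
        have e1 := HS.ch (n + 1)
        have e2 := HS.ch n
        rw [show n - 2 + 2 = n by omega] at this
        simp only [show n + 1 + 1 = n + 2 by rfl] at *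
        omega
      · obtain rfl : n = 1 := by omega
        have h1 : ∑ k ∈ Finset.univ.filter (fun k => eval (A k) q = 0), nk k ≤ ∑ k, nk k :=
          Finset.sum_le_sum_of_subset (Finset.subset_univ _)
        have h2 : ∑ k, nk k ≤ ∑ k, (nk k + 1).choose 2 := Finset.sum_le_sum fun k _ => HS.le_ch _
        have h3 : (1 + 2).choose 2 = 3 := by decide
        omega
  · rintro ⟨h1, h2⟩
    have hL : ∀ S, HS.IsL A S → ∑ k ∈ S, nk k ≤ n + 1 := by
      rintro S ⟨a, b, c, h, rfl⟩
      exact h1 _ (HS.ln_ne_zero h) (HS.deg_ln h)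
    by_cases h3 : ∑ k, nk k ≤ 2 * n + 1
    · exact HS.case1 hA n nk h3 hL
    · apply HS.case2 hA n nk (by omega) hL hscheme
      intro q hq hd
      by_contra hcon
      push Not at hcon
      have := h2 q hq hd
      rw [Finset.filter_true_of_mem (fun k _ => hcon k (hnk k))] at this
      omega
end

section
/- Let n ≥ 1 and let N = {n_1,…,n_s; n} be a scheme for distinct nodes X = {A_1,…,A_s} ⊂ ℝ² such that Σ_{k=1}^s n_k ≤ 2n+1. Then the Hermite interpolation problem (N,X) is n-solvable if and only if for every line ℓ, the sum of the multiplicities n_k over the nodes A_k lying on ℓ is at most n+1. -/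
open MvPolynomial

/-- maximal ideal of the point `A`. -/
noncomputable def ptIdeal (A : Fin 2 → ℝ) : Ideal (MvPolynomial (Fin 2) ℝ) :=
  Ideal.span {X 0 - C (A 0), X 1 - C (A 1)}

lemma X0_mem (A : Fin 2 → ℝ) : X 0 - C (A 0) ∈ ptIdeal A := Ideal.subset_span (by simp)
lemma X1_mem (A : Fin 2 → ℝ) : X 1 - C (A 1) ∈ ptIdeal A := Ideal.subset_span (by simp)

/-- `Dij` as a linear map. -/
noncomputable def DL (i j : ℕ) : MvPolynomial (Fin 2) ℝ →ₗ[ℝ] MvPolynomial (Fin 2) ℝ :=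
  ((pderiv (R := ℝ) (0 : Fin 2)).toLinearMap ^ i) ∘ₗ ((pderiv (R := ℝ) (1 : Fin 2)).toLinearMap ^ j)

lemma Dij_eq (i j : ℕ) (p) : Dij i j p = DL i j p := by
  simp only [DL, LinearMap.comp_apply, Module.End.pow_apply, Dij]
  rfl

lemma pderiv_mem_pow (A : Fin 2 → ℝ) (v : Fin 2) (m : ℕ) (p) (hp : p ∈ ptIdeal A ^ (m + 1)) :
    pderiv v p ∈ ptIdeal A ^ m := by
  induction m generalizing p with
  | zero => simp
  | succ m ih =>
    rw [pow_succ] at hp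
    refine Submodule.mul_induction_on hp ?_ ?_
    · intro a ha b hb
      rw [Derivation.leibniz]
      refine Ideal.add_mem _ (Ideal.mul_mem_right _ _ ha) ?_
      rw [smul_eq_mul, mul_comm, pow_succ]
      exact Ideal.mul_mem_mul (ih a ha) hb
    · intro a b ha hb
      rw [map_add]; exact Ideal.add_mem _ ha hb

lemma iter_mem_pow (A : Fin 2 → ℝ) (v : Fin 2) (i m : ℕ) (p) (hp : p ∈ ptIdeal A ^ (m + i)) :
    (fun q => pderiv v q)^[i] p ∈ ptIdeal A ^ m := by
  induction i generalizing p with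
  | zero => simpa using hp
  | succ i ih =>
    rw [Function.iterate_succ_apply]
    exact ih _ (pderiv_mem_pow A v _ p (by rwa [← add_assoc] at hp))

lemma eval_of_mem (A : Fin 2 → ℝ) (p) (hp : p ∈ ptIdeal A) : eval A p = 0 := by
  have : ptIdeal A ≤ RingHom.ker (eval A) := by
    rw [ptIdeal, Ideal.span_le]
    intro q hq
    rcases hq with rfl | rfl <;> simp [RingHom.mem_ker]
  exact this hp

lemma Dij_of_mem (A : Fin 2 → ℝ) (m i j : ℕ) (h : i + j + 1 ≤ m) (p) (hp : p ∈ ptIdeal A ^ m) :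
    eval A (Dij i j p) = 0 := by
  apply eval_of_mem
  rw [← pow_one (ptIdeal A)]
  refine iter_mem_pow A 0 i 1 _ (iter_mem_pow A 1 j _ _ ?_)
  exact Ideal.pow_le_pow_right (by omega) hp

lemma iter1 (A : Fin 2 → ℝ) (k l j : ℕ) :
    (fun q => pderiv (R := ℝ) (1 : Fin 2) q)^[j] ((X 0 - C (A 0)) ^ k * (X 1 - C (A 1)) ^ l) =
     C (l.descFactorial j : ℝ) * ((X 0 - C (A 0)) ^ k * (X 1 - C (A 1)) ^ (l - j)) := by
  induction j with
  | zero => simp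
  | succ j ih =>
    rw [Function.iterate_succ_apply', ih, Nat.descFactorial_succ]
    simp [pderiv_X, Nat.sub_sub]
    ring

lemma iter0 (A : Fin 2 → ℝ) (c : ℝ) (k l i : ℕ) :
    (fun q => pderiv (R := ℝ) (0 : Fin 2) q)^[i] (C c * ((X 0 - C (A 0)) ^ k * (X 1 - C (A 1)) ^ l)) =
     C (k.descFactorial i : ℝ) * (C c * ((X 0 - C (A 0)) ^ (k - i) * (X 1 - C (A 1)) ^ l)) := by
  induction i with
  | zero => simp
  | succ j ih =>
    rw [Function.iterate_succ_apply', ih, Nat.descFactorial_succ]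
    simp [pderiv_X, Nat.sub_sub]
    ring

lemma Dij_mono (A : Fin 2 → ℝ) (i j k l : ℕ) :
    eval A (Dij i j ((X 0 - C (A 0)) ^ k * (X 1 - C (A 1)) ^ l)) =
      if i = k ∧ j = l then (i.factorial * j.factorial : ℝ) else 0 := by
  rw [Dij, iter1, iter0]
  simp only [map_mul, eval_C, map_pow, map_sub, eval_X, sub_self]
  split_ifs with h
  · obtain ⟨rfl, rfl⟩ := h
    simp [Nat.descFactorial_self]
  · rcases lt_trichotomy i k with h1 | h1 | h1
    · simp [show k - i ≠ 0 by omega]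
    · rcases lt_trichotomy j l with h2 | h2 | h2
      · simp [show l - j ≠ 0 by omega]
      · exact absurd ⟨h1, h2⟩ h
      · simp [Nat.descFactorial_of_lt h2]
    · simp [Nat.descFactorial_of_lt h1]

lemma taylor (A : Fin 2 → ℝ) (p : MvPolynomial (Fin 2) ℝ) :
    ∃ P : MvPolynomial (Fin 2) ℝ, p = ∑ d ∈ P.support,
      coeff d P • ((X 0 - C (A 0)) ^ (d 0) * (X 1 - C (A 1)) ^ (d 1)) := by
  let T : MvPolynomial (Fin 2) ℝ →ₐ[ℝ] MvPolynomial (Fin 2) ℝ := aeval fun v => X v + C (A v)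
  let S : MvPolynomial (Fin 2) ℝ →ₐ[ℝ] MvPolynomial (Fin 2) ℝ := aeval fun v => X v - C (A v)
  have h : S.comp T = AlgHom.id ℝ _ := by
    ext v
    simp [S, T, algebraMap_eq]
  refine ⟨T p, ?_⟩
  have h2 : p = S (T p) := by
    have := DFunLike.congr_fun h p
    simpa using this.symm
  conv_lhs => rw [h2]
  conv_lhs => simp only [S]
  rw [aeval_def, eval₂_eq']
  simp [Fin.prod_univ_two, Algebra.smul_def]

lemma mem_of_Dij (A : Fin 2 → ℝ) (m : ℕ) (p)
    (h : ∀ i j, i + j + 1 ≤ m → eval A (Dij i j p) = 0) : p ∈ ptIdeal A ^ m := by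
  obtain ⟨P, hP⟩ := taylor A p
  rw [hP]
  refine Ideal.sum_mem _ fun d hd => ?_
  by_cases hm : d 0 + d 1 + 1 ≤ m
  · have := h _ _ hm
    rw [Dij_eq, hP, map_sum, map_sum, Finset.sum_eq_single d] at this
    · rw [map_smul, ← Dij_eq, smul_eval, Dij_mono] at this
      simp at this
      have h0 : coeff d P = 0 := by
        rcases this with h | h | h
        · exact h
        · exact absurd h (Nat.factorial_ne_zero _)
        · exact absurd h (Nat.factorial_ne_zero _)
      simp [h0]
    · intro e he hne
      rw [map_smul, ← Dij_eq, smul_eval, Dij_mono, if_neg, mul_zero]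
      rintro ⟨h0, h1⟩
      apply hne
      ext v; fin_cases v
      · exact h0.symm
      · exact h1.symm
    · intro h; exact absurd hd h
  · rw [smul_eq_C_mul]
    refine Ideal.mul_mem_left _ _ (Ideal.pow_le_pow_right (show m ≤ d 0 + d 1 by omega) ?_)
    rw [pow_add]
    exact Ideal.mul_mem_mul (Ideal.pow_mem_pow (X0_mem A) _) (Ideal.pow_mem_pow (X1_mem A) _)

lemma exists_data (A : Fin 2 → ℝ) (m : ℕ) (c : ℕ → ℕ → ℝ) : ∃ f : MvPolynomial (Fin 2) ℝ,
    ∀ i j, i + j + 1 ≤ m → eval A (Dij i j f) = c i j := by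
  refine ⟨∑ k ∈ Finset.range m, ∑ l ∈ Finset.range m, (c k l / (k.factorial * l.factorial)) •
    ((X 0 - C (A 0)) ^ k * (X 1 - C (A 1)) ^ l), fun i j h => ?_⟩
  rw [Dij_eq]
  simp only [map_sum, map_smul, ← Dij_eq, smul_eval, Dij_mono]
  rw [Finset.sum_eq_single i, Finset.sum_eq_single j]
  · have := Nat.factorial_ne_zero i
    have := Nat.factorial_ne_zero j
    simp; field_simp
  · intro b _ hb; rw [if_neg (by tauto), mul_zero]
  · intro h; simp at h; omega
  · intro b _ hb
    refine Finset.sum_eq_zero fun l _ => ?_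
    rw [if_neg (by tauto), mul_zero]
  · intro h; simp at h; omega

/-- Ideal-theoretic form of solvability. -/
def Solv (n s : ℕ) (nk : Fin s → ℕ) (A : Fin s → Fin 2 → ℝ) : Prop :=
  ∀ f : Fin s → MvPolynomial (Fin 2) ℝ, ∃ p : MvPolynomial (Fin 2) ℝ, p.totalDegree ≤ n ∧
    ∀ k, p - f k ∈ ptIdeal (A k) ^ nk k

lemma Dij_sub (i j : ℕ) (p q) : Dij i j (p - q) = Dij i j p - Dij i j q := by
  simp [Dij_eq]

lemma solv_iff (n s : ℕ) (nk : Fin s → ℕ) (A : Fin s → Fin 2 → ℝ) :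
    HermiteSolvable n s nk A ↔ Solv n s nk A := by
  constructor
  · intro h f
    obtain ⟨p, hp, hp2⟩ := h fun k i j => eval (A k) (Dij i j (f k))
    refine ⟨p, hp, fun k => mem_of_Dij _ _ _ fun i j hij => ?_⟩
    rw [Dij_sub, map_sub, hp2 k i j hij, sub_self]
  · intro h c
    choose f hf using fun k => exists_data (A k) (nk k) (c k)
    obtain ⟨p, hp, hp2⟩ := h f
    refine ⟨p, hp, fun k i j hij => ?_⟩
    have := Dij_of_mem _ _ i j hij _ (hp2 k)
    rw [Dij_sub, map_sub, hf k i j hij] at this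
    linarith

lemma zero_ne_single1 (v : Fin 2) : (0 = Finsupp.single v (1 : ℕ)) ↔ False := by
  simp [eq_comm]

/-- the affine linear polynomial `a x + b y + c`. -/
noncomputable def lineP (a b c : ℝ) : MvPolynomial (Fin 2) ℝ := C a * X 0 + C b * X 1 + C c

/-- point on line. -/
def OnL (a b c : ℝ) (P : Fin 2 → ℝ) : Prop := a * P 0 + b * P 1 + c = 0

lemma eval_lineP (a b c : ℝ) (P : Fin 2 → ℝ) : eval P (lineP a b c) = a * P 0 + b * P 1 + c := by
  simp [lineP]

lemma totalDegree_lineP_le (a b c : ℝ) : (lineP a b c).totalDegree ≤ 1 := by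
  unfold lineP
  refine (totalDegree_add _ _).trans (max_le ((totalDegree_add _ _).trans (max_le ?_ ?_)) ?_)
  · refine (totalDegree_mul _ _).trans ?_
    simp
  · refine (totalDegree_mul _ _).trans ?_
    simp
  · simp

lemma totalDegree_lineP (a b c : ℝ) (h : ¬ (a = 0 ∧ b = 0)) : (lineP a b c).totalDegree = 1 := by
  apply le_antisymm (totalDegree_lineP_le a b c)
  have key : ∀ v : Fin 2, coeff (Finsupp.single v 1) (lineP a b c) ≠ 0 →
      1 ≤ (lineP a b c).totalDegree := by
    intro v hv
    have := le_totalDegree (p := lineP a b c) (s := Finsupp.single v 1) (by simpa using hv)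
    simpa using this
  by_cases ha : a = 0
  · apply key 1
    simpa [lineP, coeff_X, Finsupp.single_left_inj, coeff_C, zero_ne_single1] using fun hb => h ⟨ha, hb⟩
  · apply key 0
    simpa [lineP, coeff_X, Finsupp.single_left_inj, coeff_C, zero_ne_single1] using ha

lemma exists_lineP (l : MvPolynomial (Fin 2) ℝ) (hl : l.totalDegree = 1) :
    ∃ a b c : ℝ, ¬ (a = 0 ∧ b = 0) ∧ l = lineP a b c := by
  have e : l = lineP (coeff (Finsupp.single 0 1) l) (coeff (Finsupp.single 1 1) l) (coeff 0 l) := by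
    ext d
    by_cases hd : 2 ≤ d 0 + d 1
    · have hs : ∑ i ∈ d.support, d i = d 0 + d 1 := by
        rw [Finset.sum_subset (Finset.subset_univ _) (by intro x _ hx; simpa using hx),
          Fin.sum_univ_two]
      rw [coeff_eq_zero_of_totalDegree_lt (by omega), coeff_eq_zero_of_totalDegree_lt]
      have := totalDegree_lineP_le (coeff (Finsupp.single 0 1) l) (coeff (Finsupp.single 1 1) l)
        (coeff 0 l)
      omega
    · have : d = 0 ∨ d = Finsupp.single 0 1 ∨ d = Finsupp.single 1 1 := by
        rcases Nat.eq_zero_or_pos (d 0) with h0 | h0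
        · rcases Nat.eq_zero_or_pos (d 1) with h1 | h1
          · left; ext v; fin_cases v <;> simp [h0, h1]
          · right; right; ext v; fin_cases v <;> simp [h0]; omega
        · right; left; ext v; fin_cases v <;> simp <;> omega
      rcases this with rfl | rfl | rfl <;>
      simp [lineP, coeff_X, Finsupp.single_left_inj, coeff_C, zero_ne_single1]
  refine ⟨_, _, _, ?_, e⟩
  rintro ⟨h0, h1⟩
  rw [h0, h1] at e
  rw [e] at hl
  simp [lineP] at hl

lemma line_param (a b c : ℝ) (h : ¬ (a = 0 ∧ b = 0)) :
    ∃ (φ : MvPolynomial (Fin 2) ℝ →ₐ[ℝ] Polynomial ℝ) (ψ : Polynomial ℝ →ₐ[ℝ] MvPolynomial (Fin 2) ℝ)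
      (τ : (Fin 2 → ℝ) → ℝ),
      (∀ p, (φ p).natDegree ≤ p.totalDegree) ∧
      (∀ g, (ψ g).totalDegree ≤ g.natDegree) ∧
      (∀ g, φ (ψ g) = g) ∧
      (∀ p, lineP a b c ∣ p - ψ (φ p)) ∧
      (∀ P, OnL a b c P → ∀ m, ∀ p ∈ ptIdeal P ^ m, (Polynomial.X - Polynomial.C (τ P)) ^ m ∣ φ p) ∧
      (∀ P, ψ (Polynomial.X - Polynomial.C (τ P)) ∈ ptIdeal P) ∧
      (∀ P Q, OnL a b c P → OnL a b c Q → τ P = τ Q → P = Q) := by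
  have hr : a ^ 2 + b ^ 2 ≠ 0 := by
    intro h0
    apply h
    constructor <;> nlinarith [sq_nonneg a, sq_nonneg b]
  obtain ⟨r, hrr⟩ : ∃ r, r = a ^ 2 + b ^ 2 := ⟨_, rfl⟩
  rw [← hrr] at hr
  let F : Fin 2 → Polynomial ℝ := ![Polynomial.C (-b) * Polynomial.X + Polynomial.C (-(a * c / r)),
    Polynomial.C a * Polynomial.X + Polynomial.C (-(b * c / r))]
  let u : MvPolynomial (Fin 2) ℝ := C (-b / r) * X 0 + C (a / r) * X 1
  have hu : u.totalDegree ≤ 1 := by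
    have := totalDegree_lineP_le (-b / r) (a / r) 0
    simpa [lineP] using this
  have hψφ : ∀ p, lineP a b c ∣ p - (Polynomial.aeval u) (aeval F p) := by
    intro p
    rw [← Ideal.mem_span_singleton, ← Ideal.Quotient.eq]
    have : ((Ideal.Quotient.mkₐ ℝ (Ideal.span {lineP a b c}))) =
        ((Ideal.Quotient.mkₐ ℝ (Ideal.span {lineP a b c})).comp
          ((Polynomial.aeval u).comp (aeval F))) := by
      apply MvPolynomial.algHom_ext
      intro v
      simp only [AlgHom.comp_apply, Ideal.Quotient.mkₐ_eq_mk]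
      rw [Ideal.Quotient.eq, Ideal.mem_span_singleton]
      fin_cases v
      · refine ⟨C (a / r), ?_⟩
        simp only [F, u, lineP, aeval_X, Fin.zero_eta, Matrix.cons_val_zero, map_add, map_mul,
          Polynomial.aeval_C, Polynomial.aeval_X, algebraMap_eq]
        have e1 : (C a * C (a / r) : MvPolynomial (Fin 2) ℝ) = 1 + C (-b) * C (b / r) := by
          rw [← C_mul, ← C_mul, ← C_1, ← C_add]; congr 1; field_simp; rw [hrr]; ring
        have e2 : (C b * C (a / r) : MvPolynomial (Fin 2) ℝ) = - (C (-b) * C (a / r)) := by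
          rw [← C_mul, ← C_mul, ← C_neg]; congr 1; ring
        have e3 : (C c * C (a / r) : MvPolynomial (Fin 2) ℝ) = - C (-(a * c / r)) := by
          rw [← C_mul, ← C_neg]; congr 1; ring
        have e4 : (C (-b / r) : MvPolynomial (Fin 2) ℝ) = - C (b / r) := by
          rw [← C_neg]; congr 1; ring
        rw [e4]
        linear_combination - X 0 * e1 - X 1 * e2 - e3
      · refine ⟨C (b / r), ?_⟩
        simp only [F, u, lineP, aeval_X, Fin.mk_one, Matrix.cons_val_one, map_add, map_mul,
          Polynomial.aeval_C, Polynomial.aeval_X, algebraMap_eq, Matrix.cons_val_fin_one]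
        have e1 : (C b * C (b / r) : MvPolynomial (Fin 2) ℝ) = 1 - C a * C (a / r) := by
          rw [← C_mul, ← C_mul, ← C_1, ← C_sub]; congr 1; field_simp; rw [hrr]; ring
        have e2 : (C a * C (b / r) : MvPolynomial (Fin 2) ℝ) = - (C a * C (-b / r)) := by
          rw [← C_mul, ← C_mul, ← C_neg]; congr 1; ring
        have e3 : (C c * C (b / r) : MvPolynomial (Fin 2) ℝ) = - C (-(b * c / r)) := by
          rw [← C_mul, ← C_neg]; congr 1; ring
        linear_combination - X 1 * e1 - X 0 * e2 - e3
    exact DFunLike.congr_fun this p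
  have hpt : ∀ P : Fin 2 → ℝ, OnL a b c P → P 0 = -b * ((-b * P 0 + a * P 1) / r) - a * c / r ∧
      P 1 = a * ((-b * P 0 + a * P 1) / r) - b * c / r := by
    intro P hP
    unfold OnL at hP
    constructor
    · field_simp; rw [hrr]; linear_combination a * hP
    · field_simp; rw [hrr]; linear_combination b * hP
  refine ⟨aeval F, Polynomial.aeval u, fun P => (-b * P 0 + a * P 1) / r, ?_, ?_, ?_, hψφ, ?_, ?_, ?_⟩
  · intro p
    have := aeval_natDegree_le p le_rfl F (n := 1) (by
      intro i; fin_cases i <;> exact Polynomial.natDegree_linear_le)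
    simpa using this
  · intro g
    rw [Polynomial.aeval_eq_sum_range]
    refine totalDegree_finsetSum_le fun i hi => ?_
    refine (totalDegree_smul_le _ _).trans ((totalDegree_pow _ _).trans ?_)
    simp at hi
    nlinarith
  · intro g
    have : (aeval F).comp (Polynomial.aeval u) = AlgHom.id ℝ (Polynomial ℝ) := by
      ext1
      simp only [AlgHom.comp_apply, Polynomial.aeval_X, u, F, map_add, map_mul, aeval_X, aeval_C,
        Matrix.cons_val_zero, Matrix.cons_val_one, AlgHom.id_apply, Polynomial.algebraMap_eq,
        Matrix.cons_val_fin_one]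
      have e1 : (Polynomial.C (-b / r) * Polynomial.C (-b) : Polynomial ℝ) =
          1 - Polynomial.C (a / r) * Polynomial.C a := by
        rw [← Polynomial.C_mul, ← Polynomial.C_mul, ← Polynomial.C_1, ← Polynomial.C_sub]
        congr 1; field_simp; rw [hrr]; ring
      have e2 : (Polynomial.C (-b / r) * Polynomial.C (-(a * c / r)) : Polynomial ℝ) =
          - (Polynomial.C (a / r) * Polynomial.C (-(b * c / r))) := by
        rw [← Polynomial.C_mul, ← Polynomial.C_mul, ← Polynomial.C_neg]
        congr 1; ring
      linear_combination Polynomial.X * e1 + e2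
    exact DFunLike.congr_fun this g
  · intro P hP m p hp
    rw [← Ideal.mem_span_singleton, ← Ideal.span_singleton_pow]
    have h1 : ptIdeal P ≤ Ideal.comap (aeval F : MvPolynomial (Fin 2) ℝ →ₐ[ℝ] Polynomial ℝ)
        (Ideal.span {Polynomial.X - Polynomial.C ((-b * P 0 + a * P 1) / r)}) := by
      rw [ptIdeal, Ideal.span_le]
      obtain ⟨h0, h1⟩ := hpt P hP
      generalize (-b * P 0 + a * P 1) / r = t at *
      intro q hq
      rw [SetLike.mem_coe, Ideal.mem_comap, Ideal.mem_span_singleton]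
      rcases hq with rfl | rfl
      · refine ⟨Polynomial.C (-b), ?_⟩
        simp [F, h0]; ring
      · refine ⟨Polynomial.C a, ?_⟩
        simp [F, h1]; ring
    exact Ideal.le_comap_pow _ m (Ideal.pow_right_mono h1 m hp)
  · intro P
    have : (Polynomial.aeval u) (Polynomial.X - Polynomial.C ((-b * P 0 + a * P 1) / r)) =
      C (-b / r) * (X 0 - C (P 0)) + C (a / r) * (X 1 - C (P 1)) := by
      simp only [map_sub, Polynomial.aeval_X, Polynomial.aeval_C, u, algebraMap_eq]
      have : (C ((-b * P 0 + a * P 1) / r) : MvPolynomial (Fin 2) ℝ) =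
        C (-b / r) * C (P 0) + C (a / r) * C (P 1) := by
        rw [← C_mul, ← C_mul, ← C_add]; congr 1; ring
      rw [this]; ring
    rw [this]
    exact Ideal.add_mem _ (Ideal.mul_mem_left _ _ (X0_mem P)) (Ideal.mul_mem_left _ _ (X1_mem P))
  · intro P Q hP hQ hPQ
    obtain ⟨p0, p1⟩ := hpt P hP
    obtain ⟨q0, q1⟩ := hpt Q hQ
    simp only at hPQ
    rw [← hPQ] at q0 q1
    ext v; fin_cases v
    · exact p0.trans q0.symm
    · exact p1.trans q1.symm

lemma univ_hermite {ι : Type*} [DecidableEq ι] (S : Finset ι) (t : ι → ℝ) (ht : ∀ i ∈ S, ∀ j ∈ S, t i = t j → i = j)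
    (m : ι → ℕ) (g : ι → Polynomial ℝ) (n : ℕ) (hS : ∑ i ∈ S, m i ≤ n + 1) :
    ∃ p : Polynomial ℝ, p.natDegree ≤ n ∧
      ∀ i ∈ S, (Polynomial.X - Polynomial.C (t i)) ^ m i ∣ p - g i := by
  have hcop : ∀ i j : S, i ≠ j → IsCoprime ((Polynomial.X - Polynomial.C (t i)) ^ m i)
      ((Polynomial.X - Polynomial.C (t j)) ^ m j) := by
    intro i j hij
    apply IsCoprime.pow
    apply Polynomial.isCoprime_X_sub_C_of_isUnit_sub
    refine (sub_ne_zero_of_ne fun h => hij ?_).isUnit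
    exact Subtype.ext (ht _ i.2 _ j.2 h)
  obtain ⟨q, hq⟩ := Ideal.exists_forall_sub_mem_ideal
    (I := fun i : S => Ideal.span {(Polynomial.X - Polynomial.C (t i)) ^ m i})
    (fun i j hij => (Ideal.isCoprime_span_singleton_iff _ _).2 (hcop i j hij)) (fun i => g i)
  set M : Polynomial ℝ := ∏ i ∈ S, (Polynomial.X - Polynomial.C (t i)) ^ m i with hM
  have hmon : M.Monic := Polynomial.monic_prod_of_monic _ _
    fun i _ => (Polynomial.monic_X_sub_C _).pow _
  have hdeg : M.natDegree = ∑ i ∈ S, m i := by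
    rw [hM, Polynomial.natDegree_prod_of_monic _ _ fun i _ => (Polynomial.monic_X_sub_C _).pow _]
    simp
  refine ⟨q %ₘ M, ?_, fun i hi => ?_⟩
  · have h1 := Polynomial.degree_modByMonic_lt q hmon
    rw [Polynomial.degree_eq_natDegree hmon.ne_zero, hdeg] at h1
    apply Polynomial.natDegree_le_of_degree_le
    rw [Polynomial.degree_le_iff_coeff_zero]
    intro N hN
    apply Polynomial.coeff_eq_zero_of_degree_lt
    refine h1.trans_le ?_
    have : n < N := by exact_mod_cast hN
    exact_mod_cast (by omega : ∑ i ∈ S, m i ≤ N)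
  · have h1 := Polynomial.dvd_modByMonic_sub q M
    have h2 := hq ⟨i, hi⟩
    rw [Ideal.mem_span_singleton] at h2
    have h3 : (Polynomial.X - Polynomial.C (t i)) ^ m i ∣ M :=
      Finset.dvd_prod_of_mem (fun i => (Polynomial.X - Polynomial.C (t i)) ^ m i) hi
    have := dvd_add (h3.trans h1) h2
    simpa using this

lemma sub_C_mem (A : Fin 2 → ℝ) (p) : p - C (eval A p) ∈ ptIdeal A := by
  rw [← pow_one (ptIdeal A)]
  refine mem_of_Dij A 1 _ fun i j hij => ?_
  obtain ⟨rfl, rfl⟩ : i = 0 ∧ j = 0 := by omega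
  simp [Dij]

open scoped Classical in
lemma solv_step (n s : ℕ) (nk : Fin s → ℕ) (A : Fin s → Fin 2 → ℝ) (hA : Function.Injective A)
    (a b c : ℝ) (h : ¬ (a = 0 ∧ b = 0))
    (hline : ∑ k ∈ Finset.univ.filter (fun k => OnL a b c (A k)), nk k ≤ n + 2)
    (hres : Solv n s (fun k => if OnL a b c (A k) then nk k - 1 else nk k) A) :
    Solv (n + 1) s nk A := by
  intro f
  obtain ⟨φ, ψ, τ, h1, h2, h3, h4, h5, h6, h7⟩ := line_param a b c h
  obtain ⟨g, hg, hg2⟩ := univ_hermite (Finset.univ.filter (fun k => OnL a b c (A k)))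
    (fun k => τ (A k)) (by
      intro i hi j hj hij
      simp at hi hj
      exact hA (h7 _ _ hi hj hij)) nk (fun k => φ (f k)) (n + 1) hline
  -- new data
  have key : ∀ k, ∃ q : MvPolynomial (Fin 2) ℝ, ∀ p,
      p - q ∈ ptIdeal (A k) ^ (if OnL a b c (A k) then nk k - 1 else nk k) →
      (ψ g + lineP a b c * p) - f k ∈ ptIdeal (A k) ^ nk k := by
    intro k
    by_cases hk : OnL a b c (A k)
    · have d1 := hg2 k (by simpa using hk)
      obtain ⟨w, hw⟩ := d1
      obtain ⟨w2, hw2⟩ := h4 (f k)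
      refine ⟨w2, fun p hp => ?_⟩
      rw [if_pos hk] at hp
      have e : ψ g + lineP a b c * p - f k =
          ψ (Polynomial.X - Polynomial.C (τ (A k))) ^ nk k * ψ w + lineP a b c * (p - w2) := by
        rw [← map_pow, ← map_mul, ← hw, map_sub]
        linear_combination - hw2
      rw [e]
      refine Ideal.add_mem _ (Ideal.mul_mem_right _ _ (Ideal.pow_mem_pow (h6 _) _)) ?_
      have hl : lineP a b c ∈ ptIdeal (A k) := by
        have := sub_C_mem (A k) (lineP a b c)
        unfold OnL at hk
        simpa [eval_lineP, hk] using this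
      refine Ideal.pow_le_pow_right (show nk k ≤ (nk k - 1) + 1 by omega) ?_
      rw [pow_succ']
      exact Ideal.mul_mem_mul hl hp
    · have hne : eval (A k) (lineP a b c) ≠ 0 := by rw [eval_lineP]; exact hk
      have hcop : IsCoprime (Ideal.span {lineP a b c}) (ptIdeal (A k)) := by
        rw [Ideal.isCoprime_iff_exists]
        refine ⟨lineP a b c * C (eval (A k) (lineP a b c))⁻¹,
          Ideal.mul_mem_right _ _ (Ideal.mem_span_singleton_self _),
          - (C (eval (A k) (lineP a b c))⁻¹ * (lineP a b c - C (eval (A k) (lineP a b c)))),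
          neg_mem (Ideal.mul_mem_left _ _ (sub_C_mem _ _)), ?_⟩
        have : (C (eval (A k) (lineP a b c))⁻¹ * C (eval (A k) (lineP a b c)) :
          MvPolynomial (Fin 2) ℝ) = 1 := by
          rw [← C_mul, inv_mul_cancel₀ hne, C_1]
        linear_combination this
      obtain ⟨x, hx, y, hy, hxy⟩ := (Ideal.isCoprime_iff_exists).1 (hcop.pow_right (n := nk k))
      obtain ⟨z, rfl⟩ := Ideal.mem_span_singleton.1 hx
      refine ⟨z * (f k - ψ g), fun p hp => ?_⟩
      rw [if_neg hk] at hp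
      have e : ψ g + lineP a b c * p - f k =
          lineP a b c * (p - z * (f k - ψ g)) - y * (f k - ψ g) := by
        linear_combination (f k - ψ g) * hxy
      rw [e]
      exact Ideal.sub_mem _ (Ideal.mul_mem_left _ _ hp) (Ideal.mul_mem_right _ _ hy)
  choose q hq using key
  obtain ⟨p, hp, hp2⟩ := hres q
  refine ⟨ψ g + lineP a b c * p, ?_, fun k => hq k p (hp2 k)⟩
  refine (totalDegree_add _ _).trans (max_le ((h2 g).trans hg) ?_)
  refine (totalDegree_mul _ _).trans ?_
  have := totalDegree_lineP_le a b c
  omega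

lemma solv_zero (s : ℕ) (nk : Fin s → ℕ) (A : Fin s → Fin 2 → ℝ) (hsum : ∑ k, nk k ≤ 1) :
    Solv 0 s nk A := by
  intro f
  by_cases h : ∃ k, nk k ≠ 0
  · obtain ⟨k, hk⟩ := h
    refine ⟨C (eval (A k) (f k)), by simp, fun l => ?_⟩
    by_cases hl : l = k
    · subst hl
      have : nk l ≤ 1 := (Finset.single_le_sum (fun _ _ => Nat.zero_le _) (Finset.mem_univ l)).trans hsum
      have : nk l = 1 := by omega
      rw [this, pow_one, ← neg_sub]
      exact neg_mem (sub_C_mem _ _)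
    · have h2 : ∑ i ∈ {l, k}, nk i ≤ ∑ k, nk k :=
        Finset.sum_le_sum_of_subset (Finset.subset_univ _)
      rw [Finset.sum_pair hl] at h2
      have : nk l = 0 := by omega
      simp [this]
  · push Not at h
    exact ⟨0, by simp, fun k => by simp [h k]⟩

lemma line_through (P Q : Fin 2 → ℝ) (h : P ≠ Q) :
    ∃ a b c : ℝ, ¬ (a = 0 ∧ b = 0) ∧ OnL a b c P ∧ OnL a b c Q := by
  refine ⟨P 1 - Q 1, Q 0 - P 0, P 0 * Q 1 - P 1 * Q 0, ?_, by unfold OnL; ring, by unfold OnL; ring⟩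
  rintro ⟨h1, h2⟩
  apply h
  ext v; fin_cases v
  · simp; linarith
  · simp; linarith

open scoped Classical in
lemma choose_line (n s : ℕ) (nk : Fin s → ℕ) (A : Fin s → Fin 2 → ℝ) (hA : Function.Injective A)
    (hsum : ∑ k, nk k ≤ 2 * (n + 1) + 1)
    (k1 k2 : Fin s) (h12 : k1 ≠ k2) (hk1 : nk k1 ≠ 0) (hk2 : nk k2 ≠ 0) :
    ∃ a b c : ℝ, ¬ (a = 0 ∧ b = 0) ∧
      (∃ i j, i ≠ j ∧ nk i ≠ 0 ∧ nk j ≠ 0 ∧ OnL a b c (A i) ∧ OnL a b c (A j)) ∧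
      ∀ a' b' c' : ℝ, ¬ (a' = 0 ∧ b' = 0) →
        n + 2 ≤ ∑ k ∈ Finset.univ.filter (fun k => OnL a' b' c' (A k)), nk k →
        ∃ i, nk i ≠ 0 ∧ OnL a b c (A i) ∧ OnL a' b' c' (A i) := by
  by_cases hM : ∃ a b c : ℝ, ¬ (a = 0 ∧ b = 0) ∧
      n + 2 ≤ ∑ k ∈ Finset.univ.filter (fun k => OnL a b c (A k)), nk k
  · obtain ⟨a, b, c, h0, hM⟩ := hM
    have common : ∀ a' b' c' : ℝ,
        n + 2 ≤ ∑ k ∈ Finset.univ.filter (fun k => OnL a' b' c' (A k)), nk k →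
        ∃ i, nk i ≠ 0 ∧ OnL a b c (A i) ∧ OnL a' b' c' (A i) := by
      intro a' b' c' h'
      by_contra hcon
      push Not at hcon
      have : ∑ k ∈ Finset.univ.filter (fun k => OnL a b c (A k)), nk k +
          ∑ k ∈ Finset.univ.filter (fun k => OnL a' b' c' (A k)), nk k ≤ ∑ k, nk k := by
        rw [Finset.sum_filter, Finset.sum_filter, ← Finset.sum_add_distrib]
        refine Finset.sum_le_sum fun k _ => ?_
        by_cases hz : nk k = 0
        · simp [hz]
        · have := hcon k hz
          split_ifs <;> simp_all
      omega
    obtain ⟨i, hi, hi1, -⟩ := common a b c hM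
    by_cases hj : ∃ j, j ≠ i ∧ nk j ≠ 0 ∧ OnL a b c (A j)
    · obtain ⟨j, hji, hj, hj1⟩ := hj
      exact ⟨a, b, c, h0, ⟨i, j, hji.symm, hi, hj, hi1, hj1⟩, fun a' b' c' _ h => common a' b' c' h⟩
    · push Not at hj
      obtain ⟨j, hij, hj0⟩ : ∃ j, i ≠ j ∧ nk j ≠ 0 := by
        by_cases h : i = k1
        · exact ⟨k2, h ▸ h12, hk2⟩
        · exact ⟨k1, h, hk1⟩
      obtain ⟨a2, b2, c2, g0, g1, g2⟩ := line_through (A i) (A j) (hA.ne hij)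
      refine ⟨a2, b2, c2, g0, ⟨i, j, hij, hi, hj0, g1, g2⟩, fun a' b' c' _ h => ?_⟩
      obtain ⟨l, hl, hl1, hl2⟩ := common a' b' c' h
      have : l = i := by
        by_contra hne
        exact hj l hne hl hl1
      subst this
      exact ⟨l, hl, g1, hl2⟩
  · push Not at hM
    obtain ⟨a, b, c, h0, h1, h2⟩ := line_through (A k1) (A k2) (hA.ne h12)
    refine ⟨a, b, c, h0, ⟨k1, k2, h12, hk1, hk2, h1, h2⟩, fun a' b' c' h' h => ?_⟩
    have := hM a' b' c' (by tauto)
    omega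

open scoped Classical in
lemma solv_of_lines (n s : ℕ) (nk : Fin s → ℕ) (A : Fin s → Fin 2 → ℝ) (hA : Function.Injective A)
    (hsum : ∑ k, nk k ≤ 2 * n + 1)
    (hl : ∀ a b c : ℝ, ¬ (a = 0 ∧ b = 0) →
      ∑ k ∈ Finset.univ.filter (fun k => OnL a b c (A k)), nk k ≤ n + 1) :
    Solv n s nk A := by
  induction n generalizing nk with
  | zero => exact solv_zero s nk A (by simpa using hsum)
  | succ n ih =>
    by_cases h2 : ∃ k1 k2, k1 ≠ k2 ∧ nk k1 ≠ 0 ∧ nk k2 ≠ 0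
    · obtain ⟨k1, k2, h12, hk1, hk2⟩ := h2
      obtain ⟨a, b, c, h0, ⟨i, j, hij, hi, hj, hi1, hj1⟩, hcom⟩ :=
        choose_line n s nk A hA hsum k1 k2 h12 hk1 hk2
      refine solv_step n s nk A hA a b c h0 (hl a b c h0) (ih _ ?_ ?_)
      · have : ∑ k, ((if OnL a b c (A k) then nk k - 1 else nk k) + ((if k = i then 1 else 0) +
            (if k = j then 1 else 0))) ≤ ∑ k, nk k := by
          refine Finset.sum_le_sum fun k _ => ?_
          by_cases hki : k = i
          · subst hki
            simp [hi1, hij]; omega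
          · by_cases hkj : k = j
            · subst hkj
              simp [hj1, hki]; omega
            · simp [hki, hkj]
              split_ifs <;> omega
        rw [Finset.sum_add_distrib, Finset.sum_add_distrib] at this
        simp at this
        omega
      · intro a' b' c' h'
        have hle := hl a' b' c' h'
        have hmono : ∀ k ∈ Finset.univ.filter (fun k => OnL a' b' c' (A k)),
            (if OnL a b c (A k) then nk k - 1 else nk k) ≤ nk k := by
          intro k _; split_ifs <;> omega
        by_cases hc : n + 2 ≤ ∑ k ∈ Finset.univ.filter (fun k => OnL a' b' c' (A k)), nk k
        · obtain ⟨l, hl0, hl1, hl2⟩ := hcom a' b' c' h' hc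
          have := Finset.sum_lt_sum hmono ⟨l, by simpa using hl2, by rw [if_pos hl1]; omega⟩
          omega
        · have := Finset.sum_le_sum hmono
          omega
    · push Not at h2
      by_cases h1 : ∃ k, nk k ≠ 0
      · obtain ⟨k, hk⟩ := h1
        have hz : ∀ l, l ≠ k → nk l = 0 := fun l hlk => h2 k l (Ne.symm hlk) hk
        have h0 : ¬ ((1 : ℝ) = 0 ∧ (0 : ℝ) = 0) := by simp
        have hon : OnL 1 0 (- A k 0) (A k) := by unfold OnL; ring
        have hle := hl 1 0 (- A k 0) h0
        have hk2 : nk k ≤ n + 2 := (Finset.single_le_sum (f := nk) (fun _ _ => Nat.zero_le _)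
          (by simpa using hon)).trans hle
        have htot : ∑ l, (if OnL 1 0 (- A k 0) (A l) then nk l - 1 else nk l) ≤ n + 1 := by
          rw [Finset.sum_eq_single k]
          · rw [if_pos hon]; omega
          · intro l _ hlk; simp [hz l hlk]
          · simp
        refine solv_step n s nk A hA 1 0 (- A k 0) h0 hle (ih _ (by omega) ?_)
        intro a' b' c' h'
        exact (Finset.sum_le_sum_of_subset (Finset.subset_univ _)).trans htot
      · push Not at h1
        intro f
        exact ⟨0, by simp, fun k => by simp [h1 k]⟩

open scoped Classical in
lemma lines_of_solv (n s : ℕ) (nk : Fin s → ℕ) (A : Fin s → Fin 2 → ℝ) (hA : Function.Injective A)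
    (hS : Solv n s nk A) (a b c : ℝ) (h : ¬ (a = 0 ∧ b = 0)) :
      ∑ k ∈ Finset.univ.filter (fun k => OnL a b c (A k)), nk k ≤ n + 1 := by
  by_contra hlt
  push Not at hlt
  obtain ⟨φ, ψ, τ, h1, h2, h3, h4, h5, h6, h7⟩ := line_param a b c h
  obtain ⟨k0, hk0, hk0'⟩ : ∃ k ∈ Finset.univ.filter (fun k => OnL a b c (A k)), nk k ≠ 0 := by
    by_contra hcon
    push Not at hcon
    rw [Finset.sum_eq_zero hcon] at hlt
    omega
  have hon : OnL a b c (A k0) := by simpa using hk0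
  obtain ⟨p, hp, hp2⟩ := hS fun k =>
    if k = k0 then ψ ((Polynomial.X - Polynomial.C (τ (A k0))) ^ (nk k0 - 1)) else 0
  let m : Fin s → ℕ := fun k => if k = k0 then nk k - 1 else nk k
  have hd0 : (Polynomial.X - Polynomial.C (τ (A k0))) ^ nk k0 ∣
      φ p - (Polynomial.X - Polynomial.C (τ (A k0))) ^ (nk k0 - 1) := by
    have := h5 (A k0) hon _ _ (hp2 k0)
    rwa [if_pos rfl, map_sub, h3] at this
  have hd : ∀ k ∈ Finset.univ.filter (fun k => OnL a b c (A k)),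
      (Polynomial.X - Polynomial.C (τ (A k))) ^ m k ∣ φ p := by
    intro k hk
    by_cases hkk : k = k0
    · subst hkk
      simp only [m, if_true]
      have := (pow_dvd_pow _ (Nat.sub_le (nk k) 1)).trans hd0
      exact (dvd_sub_left (dvd_refl _)).1 this
    · have := h5 (A k) (by simpa using hk) _ _ (hp2 k)
      simpa [m, hkk] using this
  have hM := Finset.prod_dvd_of_coprime (t := Finset.univ.filter (fun k => OnL a b c (A k)))
    (s := fun k => (Polynomial.X - Polynomial.C (τ (A k))) ^ m k) (z := φ p) (by
      intro i hi j hj hij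
      apply IsCoprime.pow
      apply Polynomial.isCoprime_X_sub_C_of_isUnit_sub
      refine (sub_ne_zero_of_ne fun h => hij ?_).isUnit
      exact hA (h7 _ _ (by simpa using hi) (by simpa using hj) h)) hd
  have hmsum : ∑ k ∈ Finset.univ.filter (fun k => OnL a b c (A k)), m k + 1 =
      ∑ k ∈ Finset.univ.filter (fun k => OnL a b c (A k)), nk k := by
    rw [← Finset.add_sum_erase _ _ hk0, ← Finset.add_sum_erase _ nk hk0]
    have : ∑ x ∈ (Finset.univ.filter (fun k => OnL a b c (A k))).erase k0, m x =
        ∑ x ∈ (Finset.univ.filter (fun k => OnL a b c (A k))).erase k0, nk x :=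
      Finset.sum_congr rfl fun x hx => by
        have := Finset.ne_of_mem_erase hx
        simp [m, this]
    rw [this]
    simp only [m, if_true]
    omega
  have hz : φ p = 0 := by
    by_contra hne
    have := Polynomial.natDegree_le_of_dvd hM hne
    rw [Polynomial.natDegree_prod_of_monic _ _ fun i _ => (Polynomial.monic_X_sub_C _).pow _] at this
    simp at this
    have := h1 p
    omega
  rw [hz, zero_sub, dvd_neg] at hd0
  have := Polynomial.natDegree_le_of_dvd hd0 (pow_ne_zero _ (Polynomial.X_sub_C_ne_zero _))
  simp at this
  omega

open scoped Classical in
theorem stmt_1 (n s : ℕ) (hn : 1 ≤ n) (nk : Fin s → ℕ) (hnk : ∀ k, 1 ≤ nk k)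
    (A : Fin s → Fin 2 → ℝ) (hA : Function.Injective A)
    (hsum : ∑ k, nk k ≤ 2 * n + 1) :
    HermiteSolvable n s nk A ↔
      ∀ ℓ : MvPolynomial (Fin 2) ℝ, ℓ ≠ 0 → ℓ.totalDegree = 1 →
        ∑ k ∈ Finset.univ.filter fun k => eval (A k) ℓ = 0, nk k ≤ n + 1 := by
  rw [solv_iff]
  constructor
  · intro hS l _ hl
    obtain ⟨a, b, c, h0, rfl⟩ := exists_lineP l hl
    have := lines_of_solv n s nk A hA hS a b c h0
    refine le_of_eq_of_le (Finset.sum_congr ?_ fun _ _ => rfl) this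
    ext x
    rw [Finset.mem_filter, Finset.mem_filter, eval_lineP, OnL]
  · intro h
    refine solv_of_lines n s nk A hA hsum fun a b c h0 => ?_
    have hd := totalDegree_lineP a b c h0
    have := h (lineP a b c) (by intro h; rw [h] at hd; simp at hd) hd
    refine le_of_eq_of_le (Finset.sum_congr ?_ fun _ _ => rfl) this
    ext x
    rw [Finset.mem_filter, Finset.mem_filter, eval_lineP, OnL]
end

section
/- (Severi) Let n ≥ 1 and let n_1,…,n_s be positive integers. The Hermite interpolation problem (N,X) with scheme N = {n_1,…,n_s; n} is n-solvable for every set X of s distinct nodes in ℝ² if and only if Σ_{k=1}^s n_k ≤ n+1. -/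
open MvPolynomial

/-- `p` vanishes to order `m` at `A`. -/
def VanishOrd (m : ℕ) (A : Fin 2 → ℝ) (p : MvPolynomial (Fin 2) ℝ) : Prop :=
  ∀ i j : ℕ, i + j < m → eval A (Dij i j p) = 0

lemma pderiv_comm_aux (p : MvPolynomial (Fin 2) ℝ) :
    pderiv (0 : Fin 2) (pderiv (1 : Fin 2) p) = pderiv 1 (pderiv 0 p) := by
  induction p using MvPolynomial.induction_on with
  | C a => simp
  | add p q hp hq => simp [hp, hq]
  | mul_X p i hp =>
    fin_cases i <;> simp [pderiv_mul, hp, pderiv_X, Pi.single_apply] <;> ring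

lemma Dij_succ_left (i j : ℕ) (p : MvPolynomial (Fin 2) ℝ) :
    Dij (i + 1) j p = Dij i j (pderiv 0 p) := by
  have h : ∀ j : ℕ, ∀ p : MvPolynomial (Fin 2) ℝ,
      pderiv (0 : Fin 2) ((fun q => pderiv (1 : Fin 2) q)^[j] p)
        = (fun q => pderiv (1 : Fin 2) q)^[j] (pderiv 0 p) := by
    intro j
    induction j with
    | zero => intro p; rfl
    | succ j ih =>
      intro p
      rw [Function.iterate_succ_apply, Function.iterate_succ_apply, ih, pderiv_comm_aux]
  unfold Dij
  rw [Function.iterate_succ_apply, h]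

lemma Dij_succ_right (i j : ℕ) (p : MvPolynomial (Fin 2) ℝ) :
    Dij i (j + 1) p = Dij i j (pderiv 1 p) := by
  unfold Dij
  rw [Function.iterate_succ_apply]

lemma Dij_zero_zero (p : MvPolynomial (Fin 2) ℝ) : Dij 0 0 p = p := rfl

lemma Dij_zero (i j : ℕ) : Dij i j 0 = 0 := by
  induction i with
  | zero =>
    induction j with
    | zero => rfl
    | succ j ih => rw [Dij_succ_right, map_zero, ih]
  | succ i ih => rw [Dij_succ_left, map_zero, ih]

lemma Dij_add (i j : ℕ) : ∀ p q : MvPolynomial (Fin 2) ℝ, Dij i j (p + q) = Dij i j p + Dij i j q := by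
  induction i with
  | zero =>
    induction j with
    | zero => intro p q; rfl
    | succ j ih => intro p q; simp only [Dij_succ_right, map_add, ih]
  | succ i ih => intro p q; simp only [Dij_succ_left, map_add, ih]

lemma Dij_C_mul (i j : ℕ) (a : ℝ) : ∀ p : MvPolynomial (Fin 2) ℝ,
    Dij i j (C a * p) = C a * Dij i j p := by
  induction i with
  | zero =>
    induction j with
    | zero => intro p; rfl
    | succ j ih => intro p; simp only [Dij_succ_right, pderiv_C_mul, smul_eq_C_mul, ih]
  | succ i ih => intro p; simp only [Dij_succ_left, pderiv_C_mul, smul_eq_C_mul, ih]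

lemma Dij_sum {ι : Type*} (i j : ℕ) (s : Finset ι) (f : ι → MvPolynomial (Fin 2) ℝ) :
    Dij i j (∑ t ∈ s, f t) = ∑ t ∈ s, Dij i j (f t) := by
  classical
  induction s using Finset.induction_on with
  | empty => simp [Dij_zero]
  | insert a s ha ih => rw [Finset.sum_insert ha, Finset.sum_insert ha, Dij_add, ih]

lemma VanishOrd.d0 {m : ℕ} {A : Fin 2 → ℝ} {p : MvPolynomial (Fin 2) ℝ} (h : VanishOrd m A p) :
    VanishOrd (m - 1) A (pderiv 0 p) := by
  intro i j hij
  rw [← Dij_succ_left]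
  exact h _ _ (by omega)

lemma VanishOrd.d1 {m : ℕ} {A : Fin 2 → ℝ} {p : MvPolynomial (Fin 2) ℝ} (h : VanishOrd m A p) :
    VanishOrd (m - 1) A (pderiv 1 p) := by
  intro i j hij
  rw [← Dij_succ_right]
  exact h _ _ (by omega)

lemma VanishOrd.eval {m : ℕ} {A : Fin 2 → ℝ} {p : MvPolynomial (Fin 2) ℝ} (h : VanishOrd m A p)
    (hm : 1 ≤ m) : MvPolynomial.eval A p = 0 := h 0 0 (by omega)

lemma VanishOrd.add {m : ℕ} {A : Fin 2 → ℝ} {p q : MvPolynomial (Fin 2) ℝ} (h : VanishOrd m A p)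
    (h' : VanishOrd m A q) : VanishOrd m A (p + q) := by
  intro i j hij
  rw [Dij_add, map_add, h i j hij, h' i j hij, add_zero]

lemma vanishOrd_succ {m : ℕ} {A : Fin 2 → ℝ} {p : MvPolynomial (Fin 2) ℝ}
    (h : MvPolynomial.eval A p = 0) (h0 : VanishOrd m A (pderiv 0 p))
    (h1 : VanishOrd m A (pderiv 1 p)) : VanishOrd (m + 1) A p := by
  intro i j hij
  rcases i with _ | i
  · rcases j with _ | j
    · exact h
    · rw [Dij_succ_right]; exact h1 _ _ (by omega)
  · rw [Dij_succ_left]; exact h0 _ _ (by omega)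

lemma vanishOrd_mul {A : Fin 2 → ℝ} (N : ℕ) : ∀ (a b : ℕ) (p q : MvPolynomial (Fin 2) ℝ),
    N ≤ a + b → VanishOrd a A p → VanishOrd b A q → VanishOrd N A (p * q) := by
  induction N with
  | zero => intro a b p q _ _ _ i j hij; omega
  | succ N ih =>
    intro a b p q hN hp hq
    apply vanishOrd_succ
    · rw [map_mul]
      by_cases ha : 1 ≤ a
      · rw [hp.eval ha, zero_mul]
      · rw [hq.eval (by omega), mul_zero]
    · rw [pderiv_mul]
      exact (ih (a - 1) b _ _ (by omega) hp.d0 hq).add (ih a (b - 1) _ _ (by omega) hp hq.d0)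
    · rw [pderiv_mul]
      exact (ih (a - 1) b _ _ (by omega) hp.d1 hq).add (ih a (b - 1) _ _ (by omega) hp hq.d1)

lemma vanishOrd_zero (A : Fin 2 → ℝ) (p : MvPolynomial (Fin 2) ℝ) : VanishOrd 0 A p := by
  intro i j hij; omega

lemma vanishOrd_one {A : Fin 2 → ℝ} {p : MvPolynomial (Fin 2) ℝ} (h : MvPolynomial.eval A p = 0) :
    VanishOrd 1 A p :=
  vanishOrd_succ h (vanishOrd_zero _ _) (vanishOrd_zero _ _)

lemma vanishOrd_pow {A : Fin 2 → ℝ} {p : MvPolynomial (Fin 2) ℝ} (h : MvPolynomial.eval A p = 0)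
    (m : ℕ) : VanishOrd m A (p ^ m) := by
  induction m with
  | zero => exact vanishOrd_zero _ _
  | succ m ih =>
    rw [pow_succ]
    exact vanishOrd_mul _ m 1 _ _ le_rfl ih (vanishOrd_one h)

/-- leading-order behaviour of a product -/
lemma eval_Dij_mul {A : Fin 2 → ℝ} {m : ℕ} (g h : MvPolynomial (Fin 2) ℝ) (hh : VanishOrd m A h)
    (i j : ℕ) (hij : i + j ≤ m) :
    eval A (Dij i j (g * h)) = eval A g * eval A (Dij i j h) := by
  have h1 : VanishOrd (m + 1) A ((g - C (eval A g)) * h) :=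
    vanishOrd_mul _ 1 m _ _ (by omega) (vanishOrd_one (by simp)) hh
  have h2 : g * h = (g - C (eval A g)) * h + C (eval A g) * h := by ring
  rw [h2, Dij_add, map_add, h1 i j (by omega), Dij_C_mul, map_mul, eval_C, zero_add]

/-- The monomial `(x - a)^i (y - b)^j`. -/
noncomputable def mono2 (A : Fin 2 → ℝ) (i j : ℕ) : MvPolynomial (Fin 2) ℝ :=
  (X 0 - C (A 0)) ^ i * (X 1 - C (A 1)) ^ j

lemma mono2_vanish (A : Fin 2 → ℝ) (i j : ℕ) : VanishOrd (i + j) A (mono2 A i j) :=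
  vanishOrd_mul _ i j _ _ le_rfl (vanishOrd_pow (by simp) i) (vanishOrd_pow (by simp) j)

lemma pderiv0_mono2 (A : Fin 2 → ℝ) (i j : ℕ) :
    pderiv 0 (mono2 A i j) = C (i : ℝ) * mono2 A (i - 1) j := by
  unfold mono2
  simp [pderiv_mul, pderiv_pow, pderiv_X, Pi.single_apply]
  ring

lemma pderiv1_mono2 (A : Fin 2 → ℝ) (i j : ℕ) :
    pderiv 1 (mono2 A i j) = C (j : ℝ) * mono2 A i (j - 1) := by
  unfold mono2
  simp [pderiv_mul, pderiv_pow, pderiv_X, Pi.single_apply]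
  ring

lemma Dij_mono2 (A : Fin 2 → ℝ) (i' j' : ℕ) : ∀ i j : ℕ, i' + j' = i + j →
    eval A (Dij i' j' (mono2 A i j)) =
      if i' = i ∧ j' = j then (i.factorial : ℝ) * j.factorial else 0 := by
  induction i' with
  | zero =>
    induction j' with
    | zero =>
      intro i j h
      obtain ⟨rfl, rfl⟩ : i = 0 ∧ j = 0 := by omega
      simp [Dij_zero_zero, mono2]
    | succ j' ih =>
      intro i j h
      rw [Dij_succ_right, pderiv1_mono2, Dij_C_mul, map_mul, eval_C]
      rcases j with _ | j
      · simp
      · rw [Nat.add_sub_cancel, ih i j (by omega)]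
        by_cases hc : 0 = i ∧ j' = j
        · rw [if_pos hc, if_pos (by omega), Nat.factorial_succ]; push_cast; ring
        · rw [if_neg hc, if_neg (by omega), mul_zero]
  | succ i' ih =>
    intro i j h
    rw [Dij_succ_left, pderiv0_mono2, Dij_C_mul, map_mul, eval_C]
    rcases i with _ | i
    · simp
    · rw [Nat.add_sub_cancel, ih i j (by omega)]
      by_cases hc : i' = i ∧ j' = j
      · rw [if_pos hc, if_pos (by omega), Nat.factorial_succ]; push_cast; ring
      · rw [if_neg hc, if_neg (by omega), mul_zero]

lemma totalDegree_X_sub_C_le (i : Fin 2) (a : ℝ) :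
    (X i - C a : MvPolynomial (Fin 2) ℝ).totalDegree ≤ 1 := by
  refine (totalDegree_sub _ _).trans ?_
  simp

lemma totalDegree_mono2 (A : Fin 2 → ℝ) (i j : ℕ) : (mono2 A i j).totalDegree ≤ i + j := by
  refine (totalDegree_mul _ _).trans (add_le_add ?_ ?_)
  · refine (totalDegree_pow _ _).trans ?_
    simpa using Nat.mul_le_mul_left i (totalDegree_X_sub_C_le 0 (A 0))
  · refine (totalDegree_pow _ _).trans ?_
    simpa using Nat.mul_le_mul_left j (totalDegree_X_sub_C_le 1 (A 1))

/-- A linear form vanishing at `B` but not at `A`. -/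
lemma exists_linear (A B : Fin 2 → ℝ) (h : A ≠ B) : ∃ L : MvPolynomial (Fin 2) ℝ,
    L.totalDegree ≤ 1 ∧ eval B L = 0 ∧ eval A L ≠ 0 := by
  by_cases h0 : A 0 = B 0
  · have h1 : A 1 ≠ B 1 := by
      intro h1; apply h; ext i; fin_cases i <;> assumption
    exact ⟨X 1 - C (B 1), totalDegree_X_sub_C_le _ _, by simp, by simpa [sub_eq_zero] using h1⟩
  · exact ⟨X 0 - C (B 0), totalDegree_X_sub_C_le _ _, by simp, by simpa [sub_eq_zero] using h0⟩

lemma suff_aux (s : ℕ) (A : Fin s → Fin 2 → ℝ) (hA : Function.Injective A)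
    (c : Fin s → ℕ → ℕ → ℝ) (N : ℕ) : ∀ nk : Fin s → ℕ, ∑ k, nk k = N →
    ∃ p : MvPolynomial (Fin 2) ℝ, p.totalDegree ≤ N - 1 ∧
      ∀ (k : Fin s) (i j : ℕ), i + j + 1 ≤ nk k → eval (A k) (Dij i j p) = c k i j := by
  induction N with
  | zero =>
    intro nk h
    refine ⟨0, by simp, ?_⟩
    intro k i j hij
    have : nk k = 0 := by
      have := Finset.sum_eq_zero_iff.1 h k (Finset.mem_univ k)
      exact this
    omega
  | succ N ih =>
    intro nk h
    obtain ⟨k, hk⟩ : ∃ k, nk k ≠ 0 := by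
      by_contra! hc
      simp [hc] at h
    obtain ⟨m, hm⟩ := Nat.exists_eq_succ_of_ne_zero hk
    have hs : ∑ l ∈ Finset.univ.erase k, nk l + (m + 1) = N + 1 := by
      rw [← h, ← Finset.sum_erase_add _ _ (Finset.mem_univ k), hm]
    obtain ⟨p, hpd, hp⟩ := ih (Function.update nk k m) (by
      rw [← Finset.sum_erase_add _ _ (Finset.mem_univ k), Function.update_self,
        Finset.sum_congr rfl (g := fun l => nk l)]
      · omega
      · intro l hl
        rw [Function.update_of_ne (Finset.ne_of_mem_erase hl)])
    have hL : ∀ l, ∃ L : MvPolynomial (Fin 2) ℝ,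
        l ≠ k → L.totalDegree ≤ 1 ∧ eval (A l) L = 0 ∧ eval (A k) L ≠ 0 := by
      intro l
      by_cases hl : l = k
      · exact ⟨0, fun h => absurd hl h⟩
      · obtain ⟨L, h⟩ := exists_linear (A k) (A l) (fun e => hl (hA e).symm)
        exact ⟨L, fun _ => h⟩
    choose L hL using hL
    set G : MvPolynomial (Fin 2) ℝ := ∏ l ∈ Finset.univ.erase k, L l ^ nk l with hG
    have hGd : G.totalDegree ≤ ∑ l ∈ Finset.univ.erase k, nk l := by
      refine (totalDegree_finsetProd _ _).trans (Finset.sum_le_sum ?_)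
      intro l hl
      refine (totalDegree_pow _ _).trans ?_
      simpa using Nat.mul_le_mul_left (nk l) (hL l (Finset.ne_of_mem_erase hl)).1
    have hGk : eval (A k) G ≠ 0 := by
      rw [hG, map_prod, Finset.prod_ne_zero_iff]
      intro l hl
      rw [map_pow]
      exact pow_ne_zero _ (hL l (Finset.ne_of_mem_erase hl)).2.2
    have hGl : ∀ l, l ≠ k → ∀ q, VanishOrd (nk l) (A l) (G * q) := by
      intro l hl q
      rw [hG, ← Finset.mul_prod_erase _ _ (Finset.mem_erase.2 ⟨hl, Finset.mem_univ l⟩), mul_assoc]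
      exact vanishOrd_mul _ (nk l) 0 _ _ le_rfl (vanishOrd_pow (hL l hl).2.1 _)
        (vanishOrd_zero _ _)
    let d : ℕ × ℕ → ℝ := fun t => (c k t.1 t.2 - eval (A k) (Dij t.1 t.2 p)) /
      (eval (A k) G * (t.1.factorial * t.2.factorial))
    let Q : MvPolynomial (Fin 2) ℝ :=
      ∑ t ∈ Finset.HasAntidiagonal.antidiagonal m, C (d t) * mono2 (A k) t.1 t.2
    have hQd : Q.totalDegree ≤ m := by
      refine totalDegree_finsetSum_le ?_
      intro t ht
      rw [Finset.HasAntidiagonal.mem_antidiagonal] at ht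
      refine (totalDegree_mul _ _).trans ?_
      have := totalDegree_mono2 (A k) t.1 t.2
      rw [totalDegree_C]
      omega
    have hQv : VanishOrd m (A k) Q := by
      intro i j hij
      rw [Dij_sum, map_sum]
      refine Finset.sum_eq_zero fun t ht => ?_
      rw [Finset.HasAntidiagonal.mem_antidiagonal] at ht
      rw [Dij_C_mul, map_mul, mono2_vanish (A k) t.1 t.2 i j (by omega), mul_zero]
    have hQe : ∀ i j, i + j = m →
        eval (A k) (Dij i j Q) = d (i, j) * (i.factorial * j.factorial) := by
      intro i j hij
      rw [Dij_sum, map_sum, Finset.sum_eq_single (i, j)]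
      · rw [Dij_C_mul, map_mul, eval_C, Dij_mono2 _ _ _ _ _ rfl, if_pos ⟨rfl, rfl⟩]
      · intro t ht hne
        rw [Finset.HasAntidiagonal.mem_antidiagonal] at ht
        rw [Dij_C_mul, map_mul, Dij_mono2 _ _ _ _ _ (by omega), if_neg, mul_zero]
        rintro ⟨rfl, rfl⟩
        exact hne rfl
      · intro hn
        exact absurd (Finset.HasAntidiagonal.mem_antidiagonal.2 hij) hn
    refine ⟨p + G * Q, ?_, ?_⟩
    · refine (totalDegree_add _ _).trans (max_le (by omega) ?_)
      refine (totalDegree_mul _ _).trans ?_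
      omega
    · intro l i j hij
      rw [Dij_add, map_add]
      by_cases hl : l = k
      · subst hl
        rw [eval_Dij_mul G Q hQv i j (by omega)]
        by_cases hlt : i + j < m
        · rw [hQv i j hlt, mul_zero, add_zero]
          exact hp _ _ _ (by rw [Function.update_self]; omega)
        · rw [hQe i j (by omega)]
          have h1 : (i.factorial : ℝ) ≠ 0 := by exact_mod_cast i.factorial_ne_zero
          have h2 : (j.factorial : ℝ) ≠ 0 := by exact_mod_cast j.factorial_ne_zero
          simp only [d]
          field_simp
          ring
      · rw [hGl l hl Q i j (by omega), add_zero]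
        exact hp _ _ _ (by rw [Function.update_of_ne hl]; exact hij)

/-- restriction to the `x`-axis -/
noncomputable def restr (p : MvPolynomial (Fin 2) ℝ) : Polynomial ℝ :=
  aeval ![(Polynomial.X : Polynomial ℝ), 0] p

lemma derivative_restr (p : MvPolynomial (Fin 2) ℝ) :
    Polynomial.derivative (restr p) = restr (pderiv 0 p) := by
  unfold restr
  induction p using MvPolynomial.induction_on with
  | C a => simp [MvPolynomial.algebraMap_eq]
  | add p q hp hq => simp [hp, hq]
  | mul_X p i hp =>
    fin_cases i <;> simp [pderiv_mul, hp, pderiv_X, Pi.single_apply] <;> ring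

lemma iterate_derivative_restr (i : ℕ) : ∀ p : MvPolynomial (Fin 2) ℝ,
    Polynomial.derivative^[i] (restr p) = restr (Dij i 0 p) := by
  induction i with
  | zero => intro p; rfl
  | succ i ih =>
    intro p
    rw [Function.iterate_succ_apply, derivative_restr, ih, Dij_succ_left]

lemma eval_restr (a : ℝ) (p : MvPolynomial (Fin 2) ℝ) :
    Polynomial.eval a (restr p) = eval ![a, 0] p := by
  unfold restr
  induction p using MvPolynomial.induction_on with
  | C a => simp
  | add p q hp hq => simp [hp, hq]
  | mul_X p i hp =>
    fin_cases i <;> simp [hp]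

lemma natDegree_restr (p : MvPolynomial (Fin 2) ℝ) : (restr p).natDegree ≤ p.totalDegree := by
  unfold restr
  rw [aeval_def, eval₂_eq]
  refine Polynomial.natDegree_sum_le_of_forall_le _ _ ?_
  intro d hd
  refine le_trans ?_ (le_totalDegree hd)
  refine (Polynomial.natDegree_C_mul_le _ _).trans ?_
  refine (Polynomial.natDegree_prod_le _ _).trans ?_
  rw [Finsupp.sum]
  refine Finset.sum_le_sum fun i _ => ?_
  refine Polynomial.natDegree_pow_le.trans ?_
  fin_cases i <;> simp

theorem stmt_2 (n s : ℕ) (hn : 1 ≤ n) (nk : Fin s → ℕ) (hnk : ∀ k, 1 ≤ nk k) :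
    (∀ A : Fin s → Fin 2 → ℝ, Function.Injective A → HermiteSolvable n s nk A) ↔
      ∑ k, nk k ≤ n + 1 := by
  constructor
  · intro h
    have hsol := h (fun k => ![((k : ℕ) : ℝ), 0]) (by
      intro a b hab
      have := congrFun hab 0
      simp at this
      exact Fin.ext this)
    let T : Polynomial.degreeLT ℝ (n + 1) →ₗ[ℝ] ((Σ k : Fin s, Fin (nk k)) → ℝ) :=
      LinearMap.pi fun t => (Polynomial.leval (((t.1 : ℕ) : ℝ))) ∘ₗ
        (Polynomial.derivative ^ (t.2 : ℕ)) ∘ₗ (Polynomial.degreeLT ℝ (n + 1)).subtype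
    have hT : Function.Surjective T := by
      intro y
      obtain ⟨p, hpd, hp⟩ := hsol (fun k i _ => if hi : i < nk k then y ⟨k, ⟨i, hi⟩⟩ else 0)
      refine ⟨⟨restr p, ?_⟩, ?_⟩
      · rw [Polynomial.mem_degreeLT]
        refine lt_of_le_of_lt Polynomial.degree_le_natDegree ?_
        have := natDegree_restr p
        exact_mod_cast (by omega : (restr p).natDegree < n + 1)
      · ext t
        obtain ⟨k, i, hi⟩ := t
        have h1 := hp k i 0 (by omega)
        rw [dif_pos hi] at h1
        rw [← h1, ← eval_restr, ← iterate_derivative_restr]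
        simp [T, Module.End.pow_apply, Polynomial.leval]
    have hle := LinearMap.finrank_le_finrank_of_surjective hT
    rw [(Polynomial.degreeLTEquiv ℝ (n + 1)).finrank_eq] at hle
    simpa using hle
  · intro h A hA c
    obtain ⟨p, hpd, hp⟩ := suff_aux s A hA c _ nk rfl
    exact ⟨p, by omega, hp⟩
end

section
/- Let N = {n_1,…,n_s; n} be a scheme for distinct nodes X = {A_1,…,A_s} ⊂ ℝ². If the Hermite interpolation problem (N,X) is n-solvable, then for every line ℓ the sum of the multiplicities n_i over the nodes A_i lying on ℓ is at most n+1. -/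
open MvPolynomial

noncomputable def dirD (u v : ℝ) : Module.End ℝ (MvPolynomial (Fin 2) ℝ) :=
  u • (pderiv (R := ℝ) (0 : Fin 2)).toLinearMap + v • (pderiv (R := ℝ) (1 : Fin 2)).toLinearMap

lemma dirD_apply (u v : ℝ) (p : MvPolynomial (Fin 2) ℝ) :
    dirD u v p = u • pderiv 0 p + v • pderiv 1 p := rfl

lemma pderiv_comm01 (p : MvPolynomial (Fin 2) ℝ) :
    pderiv 0 (pderiv 1 p) = pderiv (1 : Fin 2) (pderiv (0 : Fin 2) p) := by
  have h : ⁅pderiv (R := ℝ) (0 : Fin 2), pderiv (R := ℝ) (1 : Fin 2)⁆ = 0 := by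
    apply MvPolynomial.derivation_ext
    intro i
    fin_cases i <;> simp [Derivation.commutator_apply]
  have := congrArg (fun D => D p) h
  simp only [Derivation.commutator_apply, Derivation.zero_apply] at this
  exact sub_eq_zero.mp this

lemma Dij_eq_s4 (i j : ℕ) (p : MvPolynomial (Fin 2) ℝ) :
    (((pderiv (R := ℝ) (0 : Fin 2)).toLinearMap : Module.End ℝ (MvPolynomial (Fin 2) ℝ)) ^ i *
      ((pderiv (R := ℝ) (1 : Fin 2)).toLinearMap : Module.End ℝ (MvPolynomial (Fin 2) ℝ)) ^ j) p
      = Dij i j p := by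
  rw [Module.End.mul_apply, Module.End.pow_apply, Module.End.pow_apply]
  rfl

lemma dirD_pow (u v : ℝ) (m : ℕ) (p : MvPolynomial (Fin 2) ℝ) :
    (dirD u v ^ m) p = ∑ i ∈ Finset.range (m + 1),
      (u ^ i * v ^ (m - i) * (m.choose i : ℝ)) • Dij i (m - i) p := by
  have hc : Commute (u • ((pderiv (R := ℝ) (0 : Fin 2)).toLinearMap :
        Module.End ℝ (MvPolynomial (Fin 2) ℝ)))
      (v • ((pderiv (R := ℝ) (1 : Fin 2)).toLinearMap :
        Module.End ℝ (MvPolynomial (Fin 2) ℝ))) := by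
    apply Commute.smul_left
    apply Commute.smul_right
    apply LinearMap.ext
    intro q
    exact pderiv_comm01 q
  rw [dirD, hc.add_pow, LinearMap.sum_apply]
  refine Finset.sum_congr rfl fun i _ => ?_
  rw [smul_pow, smul_pow, ← Dij_eq_s4, smul_mul_smul_comm, ← nsmul_eq_mul', LinearMap.smul_apply,
    LinearMap.smul_apply, mul_smul, mul_smul, mul_smul]
  rw [← Nat.cast_smul_eq_nsmul ℝ, smul_comm]
  congr 1
  rw [smul_comm]

/-- The parametrised line through `P` with direction `(u,v)`. -/
noncomputable def lineF (P : Fin 2 → ℝ) (u v : ℝ) : Fin 2 → Polynomial ℝ :=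
  fun i => Polynomial.C (P i) + Polynomial.C (![u, v] i) * Polynomial.X

lemma deriv_line (P : Fin 2 → ℝ) (u v : ℝ) (p : MvPolynomial (Fin 2) ℝ) :
    Polynomial.derivative (aeval (lineF P u v) p) = aeval (lineF P u v) (dirD u v p) := by
  induction p using MvPolynomial.induction_on with
  | C a => simp [dirD_apply, MvPolynomial.algebraMap_eq]
  | add p q hp hq => simp [hp, hq]
  | mul_X p i hp =>
    rw [map_mul, Polynomial.derivative_mul, hp]
    simp only [dirD_apply, Derivation.leibniz, map_add, map_smul, map_mul, smul_eq_mul, aeval_X]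
    fin_cases i <;> simp [lineF, Polynomial.smul_eq_C_mul] <;> ring

lemma iter_deriv_line (P : Fin 2 → ℝ) (u v : ℝ) (m : ℕ) (p : MvPolynomial (Fin 2) ℝ) :
    Polynomial.derivative^[m] (aeval (lineF P u v) p)
      = aeval (lineF P u v) ((dirD u v ^ m) p) := by
  induction m with
  | zero => simp
  | succ m ih => rw [Function.iterate_succ_apply', ih, deriv_line, pow_succ', Module.End.mul_apply]

lemma eval_line (P : Fin 2 → ℝ) (u v t : ℝ) (p : MvPolynomial (Fin 2) ℝ) :
    (aeval (lineF P u v) p).eval t = eval (fun i => P i + ![u, v] i * t) p := by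
  induction p using MvPolynomial.induction_on with
  | C a => simp [MvPolynomial.algebraMap_eq]
  | add p q hp hq => simp [hp, hq]
  | mul_X p i hp => simp [hp, lineF]

lemma eval_iter (P : Fin 2 → ℝ) (u v t : ℝ) (m : ℕ) (p : MvPolynomial (Fin 2) ℝ) :
    (Polynomial.derivative^[m] (aeval (lineF P u v) p)).eval t =
      ∑ i ∈ Finset.range (m + 1), (u ^ i * v ^ (m - i) * (m.choose i : ℝ)) *
        eval (fun i => P i + ![u, v] i * t) (Dij i (m - i) p) := by
  rw [iter_deriv_line, eval_line, dirD_pow, map_sum]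
  simp [smul_eval]

lemma linear_form (l : MvPolynomial (Fin 2) ℝ) (h : l.totalDegree = 1) :
    ∃ a b c : ℝ, (a ≠ 0 ∨ b ≠ 0) ∧ ∀ x, eval x l = a * x 0 + b * x 1 + c := by
  have key : l = C (coeff (Finsupp.single 0 1) l) * X 0 + C (coeff (Finsupp.single 1 1) l) * X 1
      + C (coeff 0 l) := by
    ext m
    by_cases hm : m 0 + m 1 ≤ 1
    · have : m = 0 ∨ m = Finsupp.single 0 1 ∨ m = Finsupp.single 1 1 := by
        have : (m 0 = 0 ∧ m 1 = 0) ∨ (m 0 = 1 ∧ m 1 = 0) ∨ (m 0 = 0 ∧ m 1 = 1) := by omega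
        rcases this with h | h | h
        · left; ext i; fin_cases i <;> simp [h]
        · right; left; ext i; fin_cases i <;> simp [h]
        · right; right; ext i; fin_cases i <;> simp [h]
      rcases this with rfl | rfl | rfl <;>
        simp [coeff_C_mul, coeff_X, coeff_C, Finsupp.single_eq_single_iff, eq_comm]
    · have h0 : coeff m l = 0 := by
        apply coeff_eq_zero_of_totalDegree_lt
        rw [h, ← Finsupp.degree_apply, Finsupp.degree_eq_sum, Fin.sum_univ_two]
        omega
      rw [h0]
      have e1 : (Finsupp.single 0 1 : Fin 2 →₀ ℕ) ≠ m := by rintro rfl; simp at hm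
      have e2 : (Finsupp.single 1 1 : Fin 2 →₀ ℕ) ≠ m := by rintro rfl; simp at hm
      have e3 : (0 : Fin 2 →₀ ℕ) ≠ m := by rintro rfl; simp at hm
      simp [coeff_C_mul, coeff_X, coeff_C, e1, e2, e3]
  refine ⟨coeff (Finsupp.single 0 1) l, coeff (Finsupp.single 1 1) l, coeff 0 l, ?_, fun x => ?_⟩
  rotate_left
  · conv_lhs => rw [key]
    simp only [map_add, map_mul, eval_C, eval_X]
  · by_contra! hc
    rw [hc.1, hc.2] at key
    rw [key] at h
    simp at h

open scoped Classical in
theorem stmt_4 (n s : ℕ) (nk : Fin s → ℕ) (hnk : ∀ k, 1 ≤ nk k)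
    (A : Fin s → Fin 2 → ℝ) (hA : Function.Injective A)
    (hsolv : HermiteSolvable n s nk A) :
    ∀ ℓ : MvPolynomial (Fin 2) ℝ, ℓ ≠ 0 → ℓ.totalDegree = 1 →
      ∑ i ∈ Finset.univ.filter fun i => eval (A i) ℓ = 0, nk i ≤ n + 1 := by
  intro ℓ _ hdeg
  obtain ⟨a, b, c, hab, hl⟩ := linear_form ℓ hdeg
  set S := Finset.univ.filter fun i => eval (A i) ℓ = 0 with hS
  rcases S.eq_empty_or_nonempty with hemp | ⟨k0, hk0⟩
  · rw [hemp]; simp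
  have hpos : 0 < b ^ 2 + a ^ 2 := by
    rcases hab with h | h <;> positivity
  let t : Fin s → ℝ := fun k => (a * (A k 1 - A k0 1) - b * (A k 0 - A k0 0)) / (b ^ 2 + a ^ 2)
  have hφ : ∀ k ∈ S, (fun i => A k0 i + ![-b, a] i * t k) = A k := by
    intro k hk
    have h1 : a * A k 0 + b * A k 1 + c = 0 := by rw [← hl]; simpa [hS] using hk
    have h2 : a * A k0 0 + b * A k0 1 + c = 0 := by rw [← hl]; simpa [hS] using hk0
    have h3 : a * (A k 0 - A k0 0) + b * (A k 1 - A k0 1) = 0 := by linarith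
    funext i
    fin_cases i
    · simp only [t, Fin.zero_eta, Matrix.cons_val_zero]
      field_simp
      linear_combination (-a) * h3
    · simp only [t, Fin.mk_one, Matrix.cons_val_one, Matrix.cons_val_zero]
      field_simp
      linear_combination (-b) * h3
  have htinj : ∀ k ∈ S, ∀ k' ∈ S, t k = t k' → k = k' := by
    intro k hk k' hk' h
    apply hA
    rw [← hφ k hk, ← hφ k' hk', h]
  obtain ⟨p, hpn, hp⟩ := hsolv fun k i j =>
    if k = k0 ∧ i + j + 1 = nk k0 then (-b) ^ i * a ^ j else 0
  set q := aeval (lineF (A k0) (-b) a) p with hq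
  have hqdeg : q.natDegree ≤ n := by
    have := aeval_natDegree_le p hpn (lineF (A k0) (-b) a) (n := 1) (fun i => by
      unfold lineF; compute_degree)
    simpa using this
  have hval : ∀ k ∈ S, ∀ m, m + 1 ≤ nk k → (Polynomial.derivative^[m] q).eval (t k) =
      if k = k0 ∧ m + 1 = nk k0 then (b ^ 2 + a ^ 2) ^ m else 0 := by
    intro k hk m hm
    rw [hq, eval_iter, hφ k hk]
    have : ∀ i ∈ Finset.range (m + 1), eval (A k) (Dij i (m - i) p) =
        if k = k0 ∧ m + 1 = nk k0 then (-b) ^ i * a ^ (m - i) else 0 := by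
      intro i hi
      have hi' : i + (m - i) = m := by have := Finset.mem_range.mp hi; omega
      rw [hp k i (m - i) (by omega), hi']
    rw [Finset.sum_congr rfl fun i hi => by rw [this i hi]]
    split_ifs
    · rw [add_pow]
      refine Finset.sum_congr rfl fun i _ => ?_
      rw [← pow_mul, ← pow_mul, mul_comm 2, mul_comm 2, pow_mul, pow_mul, ← neg_sq (b ^ i)]
      have : (-b ^ i) ^ 2 = ((-b) ^ i) ^ 2 := by
        rw [neg_sq, ← pow_mul, ← pow_mul, mul_comm, pow_mul, pow_mul, neg_sq]
      rw [this]; ring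
    · simp
  have hk0v := hval k0 hk0 (nk k0 - 1) (by have := hnk k0; omega)
  rw [if_pos ⟨rfl, by have := hnk k0; omega⟩] at hk0v
  have hq0 : q ≠ 0 := by
    intro h
    rw [h] at hk0v
    simp only [Polynomial.iterate_derivative_zero, Polynomial.eval_zero] at hk0v
    exact (pow_pos hpos _).ne hk0v
  let mm : Fin s → ℕ := fun k => if k = k0 then nk k - 1 else nk k
  have hroot : ∀ k ∈ S, mm k ≤ q.rootMultiplicity (t k) := by
    intro k hk
    rcases Nat.eq_zero_or_pos (mm k) with h0 | h0
    · omega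
    have : mm k - 1 < q.rootMultiplicity (t k) := by
      rw [Polynomial.lt_rootMultiplicity_iff_isRoot_iterate_derivative hq0]
      intro j hj
      have hmm : mm k ≤ nk k := by simp only [mm]; split_ifs <;> omega
      rw [Polynomial.IsRoot, hval k hk j (by omega), if_neg]
      rintro ⟨rfl, h2⟩
      simp only [mm, if_true] at hj h0
      omega
    omega
  have hdvd : ∏ k ∈ S, (Polynomial.X - Polynomial.C (t k)) ^ mm k ∣ q := by
    apply Finset.prod_dvd_of_coprime
    · intro k hk k' hk' hne
      apply IsCoprime.pow
      apply Polynomial.isCoprime_X_sub_C_of_isUnit_sub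
      rw [isUnit_iff_ne_zero, sub_ne_zero]
      exact fun h => hne (htinj k hk k' hk' h)
    · intro k hk
      exact (Polynomial.le_rootMultiplicity_iff hq0).mp (hroot k hk)
  have hle := Polynomial.natDegree_le_of_dvd hdvd hq0
  rw [Polynomial.natDegree_prod_of_monic _ _ fun k _ => (Polynomial.monic_X_sub_C _).pow _] at hle
  simp only [Polynomial.natDegree_pow, Polynomial.natDegree_X_sub_C, mul_one] at hle
  have e1 := Finset.add_sum_erase S mm hk0
  have e2 := Finset.add_sum_erase S nk hk0
  have e3 : ∑ k ∈ S.erase k0, mm k = ∑ k ∈ S.erase k0, nk k :=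
    Finset.sum_congr rfl fun k hk => by simp [mm, Finset.ne_of_mem_erase hk]
  have e4 : mm k0 = nk k0 - 1 := by simp [mm]
  omega
end

section
/- Let N = {n_1,…,n_s; n} be a scheme for distinct nodes X = {A_1,…,A_s} ⊂ ℝ². If the Hermite interpolation problem (N,X) is n-solvable, then for any two distinct indices i, j ∈ {1,…,s} one has n_i + n_j ≤ n + 1. -/
open MvPolynomial

lemma pd_comm (i j : Fin 2) (p : MvPolynomial (Fin 2) ℝ) :
    pderiv i (pderiv j p) = pderiv j (pderiv i p) := by
  have h : ⁅(pderiv i : Derivation ℝ (MvPolynomial (Fin 2) ℝ) (MvPolynomial (Fin 2) ℝ)),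
      (pderiv j : Derivation ℝ (MvPolynomial (Fin 2) ℝ) (MvPolynomial (Fin 2) ℝ))⁆ = 0 := by
    apply MvPolynomial.derivation_ext
    intro k
    rw [Derivation.commutator_apply]
    simp [pderiv_X, Pi.single_apply, apply_ite]
  have h2 := congrArg (fun D => D p) h
  simp only [Derivation.commutator_apply] at h2
  simpa [sub_eq_zero] using h2

lemma Dij_pd1 (a b : ℕ) (p : MvPolynomial (Fin 2) ℝ) : Dij a b (pderiv 1 p) = Dij a (b+1) p := by
  simp [Dij, Function.iterate_succ_apply]

lemma Dij_pd0 (a b : ℕ) (p : MvPolynomial (Fin 2) ℝ) : Dij a b (pderiv 0 p) = Dij (a+1) b p := by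
  unfold Dij
  rw [Function.iterate_succ_apply]
  congr 1
  induction b generalizing p with
  | zero => rfl
  | succ b ih =>
    rw [Function.iterate_succ_apply, Function.iterate_succ_apply]
    rw [pd_comm, ih]

lemma Dij_sub_s6 (a b : ℕ) (p q : MvPolynomial (Fin 2) ℝ) :
    Dij a b (p - q) = Dij a b p - Dij a b q := by
  have h : ∀ (i : Fin 2) (a : ℕ) (p q : MvPolynomial (Fin 2) ℝ),
      (fun q => pderiv i q)^[a] (p - q) = (fun q => pderiv i q)^[a] p - (fun q => pderiv i q)^[a] q := by
    intro i a
    induction a with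
    | zero => intros; rfl
    | succ a ih => intro p q; simp only [Function.iterate_succ_apply, map_sub, ih]
  unfold Dij
  rw [h, h]

/-- Restriction to the line `u + t v`. -/
noncomputable def lineRes (u v : Fin 2 → ℝ) :
    MvPolynomial (Fin 2) ℝ →ₐ[ℝ] Polynomial ℝ :=
  aeval (fun i => Polynomial.C (u i) + Polynomial.C (v i) * Polynomial.X)

lemma lineRes_eval (u v : Fin 2 → ℝ) (t : ℝ) (p : MvPolynomial (Fin 2) ℝ) :
    (lineRes u v p).eval t = eval (fun i => u i + v i * t) p := by
  induction p using MvPolynomial.induction_on with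
  | C a => simp [lineRes]
  | add p q hp hq => simp [hp, hq]
  | mul_X p i hp => simp [hp]; left; simp [lineRes]

lemma lineRes_deriv (u v : Fin 2 → ℝ) (p : MvPolynomial (Fin 2) ℝ) :
    Polynomial.derivative (lineRes u v p) =
      Polynomial.C (v 0) * lineRes u v (pderiv 0 p)
        + Polynomial.C (v 1) * lineRes u v (pderiv 1 p) := by
  induction p using MvPolynomial.induction_on with
  | C a => simp [lineRes]
  | add p q hp hq => simp [hp, hq]; ring
  | mul_X p i hp =>
    have hX : ∀ i, lineRes u v (X i) = Polynomial.C (u i) + Polynomial.C (v i) * Polynomial.X := by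
      intro i; simp [lineRes]
    rw [map_mul, Polynomial.derivative_mul, hp]
    fin_cases i <;> simp [hX, pderiv_X] <;> ring

lemma iter_deriv (u v : Fin 2 → ℝ) (t : ℝ) (m : ℕ) : ∀ (p : MvPolynomial (Fin 2) ℝ),
    (∀ a b, a + b = m → eval (fun i => u i + v i * t) (Dij a b p) = 0) →
    (Polynomial.derivative^[m] (lineRes u v p)).eval t = 0 := by
  induction m with
  | zero =>
    intro p h
    simpa [lineRes_eval, Dij] using h 0 0 rfl
  | succ m ih =>
    intro p h
    rw [Function.iterate_succ_apply, lineRes_deriv, iterate_map_add,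
      Polynomial.iterate_derivative_C_mul, Polynomial.iterate_derivative_C_mul]
    simp only [Polynomial.eval_add, Polynomial.eval_mul]
    rw [ih (pderiv 0 p) fun a b hab => by rw [Dij_pd0]; exact h _ _ (by omega),
      ih (pderiv 1 p) fun a b hab => by rw [Dij_pd1]; exact h _ _ (by omega)]
    simp

lemma dvd_line (u v : Fin 2 → ℝ) (t : ℝ) (m : ℕ) (p : MvPolynomial (Fin 2) ℝ)
    (h : ∀ a b, a + b + 1 ≤ m → eval (fun i => u i + v i * t) (Dij a b p) = 0) :
    (Polynomial.X - Polynomial.C t) ^ m ∣ lineRes u v p := by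
  by_cases h0 : lineRes u v p = 0
  · simp [h0]
  rcases m with _ | m
  · simp
  rw [← Polynomial.le_rootMultiplicity_iff h0]
  apply Polynomial.lt_rootMultiplicity_of_isRoot_iterate_derivative h0
  intro k hk
  exact iter_deriv u v t k p fun a b hab => h a b (by omega)

lemma lineRes_natDegree (u v : Fin 2 → ℝ) (p : MvPolynomial (Fin 2) ℝ) :
    (lineRes u v p).natDegree ≤ p.totalDegree := by
  have := MvPolynomial.aeval_natDegree_le (m := p.totalDegree) (F := p) le_rfl
    (fun i => Polynomial.C (u i) + Polynomial.C (v i) * Polynomial.X) (n := 1) (by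
      intro i; compute_degree)
  simpa [lineRes] using this

theorem stmt_6 (n s : ℕ) (nk : Fin s → ℕ) (hnk : ∀ k, 1 ≤ nk k)
    (A : Fin s → Fin 2 → ℝ) (hA : Function.Injective A)
    (hsolv : HermiteSolvable n s nk A) :
    ∀ i j : Fin s, i ≠ j → nk i + nk j ≤ n + 1 := by
  intro i j hij
  by_contra! hlt
  obtain ⟨k, hk⟩ : ∃ k, nk i = k + 1 := ⟨nk i - 1, by have := hnk i; omega⟩
  set u := A i with hu
  set v : Fin 2 → ℝ := fun l => A j l - A i l with hv
  let L : MvPolynomial (Fin 2) ℝ := C (v 0) * (X 0 - C (u 0)) + C (v 1) * (X 1 - C (u 1))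
  have hc : v 0 ^ 2 + v 1 ^ 2 ≠ 0 := by
    intro h
    have h0 : v 0 = 0 := by nlinarith [sq_nonneg (v 0), sq_nonneg (v 1)]
    have h1 : v 1 = 0 := by nlinarith [sq_nonneg (v 0), sq_nonneg (v 1)]
    apply hij
    apply hA
    funext l
    simp only [hv] at h0 h1
    fin_cases l
    · simp; linarith
    · simp; linarith
  have hL : lineRes u v L = Polynomial.C (v 0 ^ 2 + v 1 ^ 2) * Polynomial.X := by
    simp [L, lineRes]; ring
  obtain ⟨p, hdeg, hp⟩ := hsolv fun l a b => if l = i then eval (A i) (Dij a b (L ^ k)) else 0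
  have e0 : (fun l => u l + v l * 0) = A i := by funext l; simp [hu]
  have e1 : (fun l => u l + v l * 1) = A j := by funext l; simp [hu, hv]
  have d1 := dvd_line u v 1 (nk j) p fun a b hab => by
    rw [e1, hp j a b hab, if_neg hij.symm]
  have d0 := dvd_line u v 0 (k + 1) (p - L ^ k) fun a b hab => by
    rw [e0, Dij_sub_s6, map_sub, hp i a b (by omega), if_pos rfl, sub_self]
  rw [map_sub, map_pow, hL, mul_pow, ← Polynomial.C_pow, Polynomial.C_0, sub_zero] at d0
  have d0' : Polynomial.X ^ k ∣ lineRes u v p := by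
    have := (pow_dvd_pow Polynomial.X (Nat.le_succ k)).trans d0
    exact (dvd_sub_left (Dvd.intro_left _ rfl)).1 this
  have hcop : IsCoprime ((Polynomial.X : Polynomial ℝ) ^ k)
      ((Polynomial.X - Polynomial.C 1) ^ nk j) := by
    apply IsCoprime.pow
    exact ⟨1, -1, by simp⟩
  have hdvd := hcop.mul_dvd d0' d1
  have hz : lineRes u v p = 0 := by
    by_contra hne
    have h1 := Polynomial.natDegree_le_of_dvd hdvd hne
    rw [Polynomial.natDegree_mul (pow_ne_zero _ Polynomial.X_ne_zero)
      (pow_ne_zero _ (Polynomial.X_sub_C_ne_zero 1)), Polynomial.natDegree_X_pow,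
      Polynomial.natDegree_pow, Polynomial.natDegree_X_sub_C] at h1
    have h2 := lineRes_natDegree u v p
    omega
  rw [hz, zero_sub, dvd_neg, Polynomial.X_pow_dvd_iff] at d0
  have := d0 k (Nat.lt_succ_self k)
  rw [Polynomial.coeff_C_mul, Polynomial.coeff_X_pow_self, mul_one] at this
  exact pow_ne_zero k hc this
end

section
/- Let n ≥ 1, s ≥ 2, and let n_1 ≥ n_2 ≥ ⋯ ≥ n_s be positive integers. If n_1 + n_2 ≤ n + 1 and Σ_{k=1}^s n_k ≤ 2n + 1, then Σ_{k=1}^s C(n_k+1,2) ≤ C(n+2,2), i.e. Σ_{k=1}^s n_k(n_k+1)/2 ≤ (n+1)(n+2)/2. -/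
open MvPolynomial

theorem two_choose_aux (m : ℕ) : ((Nat.choose (m + 1) 2 : ℕ) : ℤ) * 2 = (m : ℤ) * m + m := by
  have h2 : Nat.choose (m + 1) 2 * 2 = (m + 1) * m := by
    rw [Nat.choose_two_right]
    exact Nat.div_mul_cancel (Nat.even_mul_pred_self (m + 1)).two_dvd
  zify at h2
  linarith

theorem crude_aux (n r : ℕ) (nk : Fin (r + 1) → ℕ) (a b : ℕ) (ha : nk 0 = a)
    (hb0 : ∀ k : Fin r, nk k.succ ≤ b) (hbp : 1 ≤ b) (hba : b ≤ a) (h12 : a + b ≤ n + 1)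
    (hsum : ∑ k, (nk k : ℤ) ≤ 2 * n + 1) (hne : b + 1 ≤ a ∨ 2 * a ≤ n) :
    ∑ k, ((nk k : ℤ) * nk k) ≤ (n : ℤ) * n + n + 1 := by
  rw [Fin.sum_univ_succ, ha] at hsum ⊢
  have h1 : ∑ k : Fin r, ((nk k.succ : ℤ) * nk k.succ) ≤ (∑ k : Fin r, (nk k.succ : ℤ)) * b := by
    rw [Finset.sum_mul]
    refine Finset.sum_le_sum fun k _ => ?_
    have : (nk k.succ : ℤ) ≤ b := by exact_mod_cast hb0 k
    exact mul_le_mul_of_nonneg_left this (by positivity)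
  generalize ∑ k : Fin r, ((nk k.succ : ℤ) * nk k.succ) = Q at *
  generalize ∑ k : Fin r, (nk k.succ : ℤ) = S at *
  zify at hbp hba h12 hne
  have h2 : S * b ≤ (2 * n + 1 - a) * b :=
    mul_le_mul_of_nonneg_right (by linarith) (by linarith)
  suffices h : (a : ℤ) * a + (2 * n + 1 - a) * b ≤ n * n + n + 1 by linarith
  generalize (a : ℤ) = a at *
  generalize (b : ℤ) = b at *
  generalize (n : ℤ) = n at *
  have hc : 0 ≤ 2 * n + 1 - a := by linarith
  by_cases h3 : n + 2 ≤ 2 * a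
  · have h4 : (2 * n + 1 - a) * b ≤ (2 * n + 1 - a) * (n + 1 - a) :=
      mul_le_mul_of_nonneg_left (by linarith) hc
    have h5 : 0 ≤ (n - a) * (2 * a - (n + 2)) :=
      mul_nonneg (by linarith) (by linarith)
    nlinarith
  · have h3' : 2 * a ≤ n + 1 := by omega
    rcases hne with h | h
    · have h4 : (2 * n + 1 - a) * b ≤ (2 * n + 1 - a) * (a - 1) :=
        mul_le_mul_of_nonneg_left (by linarith) hc
      nlinarith
    · have h4 : (2 * n + 1 - a) * b ≤ (2 * n + 1 - a) * a :=
        mul_le_mul_of_nonneg_left (by linarith) hc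
      nlinarith

theorem stmt_7 (n s : ℕ) (hn : 1 ≤ n) (hs : 2 ≤ s) (nk : Fin s → ℕ)
    (hpos : ∀ k, 1 ≤ nk k) (hdec : ∀ i j : Fin s, i ≤ j → nk j ≤ nk i)
    (h12 : nk ⟨0, by omega⟩ + nk ⟨1, by omega⟩ ≤ n + 1)
    (hsum : ∑ k, nk k ≤ 2 * n + 1) :
    ∑ k, Nat.choose (nk k + 1) 2 ≤ Nat.choose (n + 2) 2 := by
  obtain ⟨r, rfl⟩ : ∃ r, s = r + 1 := ⟨s - 1, by omega⟩
  have h1lt : 1 < r + 1 := by omega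
  -- reduce to sums of squares over the integers
  suffices hsq : ∑ k, ((nk k : ℤ) * nk k) ≤ (n : ℤ) * n + n + 1 by
    have e1 := two_choose_aux (n + 1)
    have e2 : (∑ k, ((Nat.choose (nk k + 1) 2 : ℕ) : ℤ)) * 2
        = ∑ k, ((nk k : ℤ) * nk k) + ∑ k, (nk k : ℤ) := by
      rw [Finset.sum_mul, ← Finset.sum_add_distrib]
      exact Finset.sum_congr rfl fun k _ => two_choose_aux (nk k)
    zify at hsum ⊢
    push_cast at e1
    have e3 : (n + 1 + 1 : ℕ) = n + 2 := rfl
    rw [e3] at e1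
    nlinarith
  have ha0 : ∀ k, nk k ≤ nk ⟨0, by omega⟩ := fun k => hdec _ _ (Fin.zero_le k)
  have hb0 : ∀ k : Fin r, nk k.succ ≤ nk ⟨1, h1lt⟩ := fun k =>
    hdec _ _ (by rw [Fin.le_def]; simp)
  have hbp := hpos ⟨1, h1lt⟩
  have hba := ha0 ⟨1, h1lt⟩
  have hsum' : ∑ k, (nk k : ℤ) ≤ 2 * n + 1 := by exact_mod_cast hsum
  have hz : (⟨0, by omega⟩ : Fin (r + 1)) = 0 := rfl
  rw [hz] at h12 ha0 hba
  generalize hb : nk ⟨1, h1lt⟩ = b at *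
  generalize ha : nk 0 = a at *
  have hap : 1 ≤ a := by omega
  by_cases hex : n + 1 = 2 * a
  · by_cases hab : a = b
    · by_cases hall : ∀ k, nk k = a
      · simp only [hall, Finset.sum_const, Finset.card_univ, Fintype.card_fin, smul_eq_mul,
          nsmul_eq_mul] at hsum' ⊢
        have hr : r + 1 ≤ 3 := by
          by_contra hc
          push Not at hc
          have : (4 : ℤ) ≤ (r + 1 : ℕ) := by exact_mod_cast hc
          have ha' : (1 : ℤ) ≤ a := by exact_mod_cast hap
          have : (n : ℤ) = 2 * a - 1 := by omega
          nlinarith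
        have hr' : ((r + 1 : ℕ) : ℤ) ≤ 3 := by exact_mod_cast hr
        have hn' : (n : ℤ) = 2 * a - 1 := by omega
        rw [hn']
        nlinarith [mul_le_mul_of_nonneg_right hr' (mul_self_nonneg (a : ℤ)),
          sq_nonneg ((a : ℤ) - 1)]
      · push Not at hall
        obtain ⟨j, hj⟩ := hall
        have hnn : ∀ k ∈ Finset.univ, (0 : ℤ) ≤ (nk k : ℤ) * (a - nk k) := fun k _ =>
          mul_nonneg (by positivity) (by have := ha0 k; omega)
        have hs1 := Finset.single_le_sum hnn (Finset.mem_univ j)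
        have hs2 : ∑ k, (nk k : ℤ) * (a - nk k)
            = (∑ k, (nk k : ℤ)) * a - ∑ k, ((nk k : ℤ) * nk k) := by
          rw [Finset.sum_mul, ← Finset.sum_sub_distrib]
          exact Finset.sum_congr rfl fun k _ => by ring
        have hj1 : (1 : ℤ) ≤ nk j := by exact_mod_cast hpos j
        have hj2 : (nk j : ℤ) + 1 ≤ a := by have := ha0 j; omega
        have hj3 : (a : ℤ) - 1 ≤ (nk j : ℤ) * (a - nk j) := by nlinarith
        have hn' : (n : ℤ) = 2 * a - 1 := by omega
        have := mul_le_mul_of_nonneg_right hsum' (by positivity : (0 : ℤ) ≤ a)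
        rw [hn'] at this ⊢
        nlinarith
    · exact crude_aux n r nk a b ha hb0 hbp hba h12 hsum' (by omega)
  · exact crude_aux n r nk a b ha hb0 hbp hba h12 hsum' (by omega)
end

section
/- Let N = {n_1,…,n_s; n} be a scheme for distinct nodes X = {A_1,…,A_s} ⊂ ℝ² with Σ_{k=1}^s C(n_k+1,2) < C(n+2,2), and set r = C(n+2,2) − Σ_{k=1}^s C(n_k+1,2). Then the following are equivalent: (a) the Hermite interpolation problem (N,X) is n-solvable; (b) there exist r additional distinct points A_{s+1},…,A_{s+r} ∈ ℝ², different from the nodes of X, such that the augmented Hermite problem with scheme {n_1,…,n_s,1,…,1; n} (with r extra multiplicities equal to 1) on the node set X ∪ {A_{s+1},…,A_{s+r}} is n-correct. -/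
open MvPolynomial

/-- The Hermite interpolation problem with multiplicities `nk` on the nodes `A` is
`n`-correct: every data admits a unique interpolant in `Π_n`. -/
def HermiteCorrect (n s : ℕ) (nk : Fin s → ℕ) (A : Fin s → Fin 2 → ℝ) : Prop :=
  ∀ c : Fin s → ℕ → ℕ → ℝ,
    ∃! p : MvPolynomial (Fin 2) ℝ, p.totalDegree ≤ n ∧
      ∀ (k : Fin s) (i j : ℕ), i + j + 1 ≤ nk k → eval (A k) (Dij i j p) = c k i j


theorem hermite_exists_points (r : ℕ) : ∀ (W : Submodule ℝ (MvPolynomial (Fin 2) ℝ)),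
    Module.Finite ℝ W → Module.finrank ℝ W = r →
    ∃ B : Fin r → Fin 2 → ℝ, ∀ p ∈ W, (∀ t, eval (B t) p = 0) → p = 0 := by
  induction r with
  | zero =>
    intro W _ hW
    refine ⟨fun t => t.elim0, fun p hp _ => ?_⟩
    have : W = ⊥ := Submodule.finrank_eq_zero.mp hW
    simpa [this] using hp
  | succ r ih =>
    intro W _ hW
    have hne : W ≠ ⊥ := by
      intro h
      rw [h] at hW
      simp at hW
    obtain ⟨p, hp, hp0⟩ := Submodule.exists_mem_ne_zero_of_ne_bot hne
    have : ∃ b, eval b p ≠ 0 := by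
      by_contra! h
      exact hp0 (MvPolynomial.funext (by simpa using h))
    obtain ⟨b, hb⟩ := this
    let ev : MvPolynomial (Fin 2) ℝ →ₗ[ℝ] ℝ := (MvPolynomial.aeval b).toLinearMap
    have hev : ∀ q, ev q = eval b q := fun q => by simp [ev, MvPolynomial.aeval_eq_eval]
    let f : W →ₗ[ℝ] ℝ := ev.comp W.subtype
    have hf : Function.Surjective f := by
      apply LinearMap.surjective
      intro h
      apply hb
      rw [← hev]
      exact congrArg (fun g => g ⟨p, hp⟩) h
    have hrn := LinearMap.finrank_range_add_finrank_ker f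
    rw [LinearMap.range_eq_top.mpr hf, finrank_top, Module.finrank_self, hW] at hrn
    let W' := (LinearMap.ker f).map W.subtype
    have hW' : Module.finrank ℝ W' = r := by
      have : Module.finrank ℝ W' = Module.finrank ℝ (LinearMap.ker f) :=
        Submodule.finrank_map_subtype_eq W _
      omega
    obtain ⟨B, hB⟩ := ih W' inferInstance hW'
    refine ⟨Fin.cons b B, fun q hq h => hB q ?_ fun t => by simpa using h t.succ⟩
    refine ⟨⟨q, hq⟩, ?_, rfl⟩
    have := h 0
    simp only [Fin.cons_zero] at this
    simpa [f, hev] using this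

/-- The derivative operator as a linear map. -/
noncomputable def hermiteDlin (i j : ℕ) : MvPolynomial (Fin 2) ℝ →ₗ[ℝ] MvPolynomial (Fin 2) ℝ :=
  ((pderiv (R := ℝ) (0 : Fin 2)).toLinearMap ^ i) ∘ₗ ((pderiv (R := ℝ) (1 : Fin 2)).toLinearMap ^ j)

theorem hermiteDlin_apply (i j : ℕ) (p : MvPolynomial (Fin 2) ℝ) :
    hermiteDlin i j p = Dij i j p := by
  simp only [hermiteDlin, Dij, LinearMap.comp_apply, Module.End.pow_apply]
  rfl

/-- Index pairs of derivatives of order less than `m`. -/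
def hermiteIdx (m : ℕ) : Finset (ℕ × ℕ) := (Finset.range m).biUnion Finset.HasAntidiagonal.antidiagonal

theorem mem_hermiteIdx (m : ℕ) (x : ℕ × ℕ) : x ∈ hermiteIdx m ↔ x.1 + x.2 + 1 ≤ m := by
  simp [hermiteIdx]

theorem card_hermiteIdx (m : ℕ) : (hermiteIdx m).card = Nat.choose (m + 1) 2 := by
  rw [hermiteIdx, Finset.card_biUnion]
  · simp only [Finset.Nat.card_antidiagonal]
    induction m with
    | zero => simp
    | succ m ih =>
      rw [Finset.sum_range_succ, ih, Nat.choose_succ_succ' (m + 1) 1]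
      simp
      omega
  · intro a _ b _ hab
    rw [Function.onFun, Finset.disjoint_left]
    intro x hx hy
    simp at hx hy
    omega

theorem finrank_hermite (n : ℕ) :
    Module.Finite ℝ (restrictTotalDegree (Fin 2) ℝ n) ∧
    Module.finrank ℝ (restrictTotalDegree (Fin 2) ℝ n) = Nat.choose (n + 2) 2 := by
  let e : {d : Fin 2 →₀ ℕ | d.sum (fun _ e => e) ≤ n} ≃ hermiteIdx (n + 1) :=
    { toFun := fun d => ⟨(d.1 0, d.1 1), by
        have := d.2
        rw [Set.mem_ofPred_eq, Finsupp.sum_fintype _ _ (by simp)] at this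
        simp at this
        rw [mem_hermiteIdx]
        simpa using this⟩
      invFun := fun x => ⟨Finsupp.equivFunOnFinite.symm ![x.1.1, x.1.2], by
        have := (mem_hermiteIdx _ _).mp x.2
        rw [Set.mem_ofPred_eq, Finsupp.sum_fintype _ _ (by simp)]
        simpa using this⟩
      left_inv := fun d => by
        ext i
        fin_cases i <;> simp
      right_inv := fun x => by simp }
  let b := (basisRestrictSupport ℝ {d : Fin 2 →₀ ℕ | d.sum (fun _ e => e) ≤ n}).reindex e
  constructor
  · exact Module.Finite.of_basis b
  · have := Module.finrank_eq_card_basis b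
    rw [Fintype.card_coe, card_hermiteIdx] at this
    exact this

theorem stmt_10 (n s : ℕ) (nk : Fin s → ℕ) (hnk : ∀ k, 1 ≤ nk k)
    (A : Fin s → Fin 2 → ℝ) (hA : Function.Injective A)
    (hlt : ∑ k, Nat.choose (nk k + 1) 2 < Nat.choose (n + 2) 2)
    (r : ℕ) (hr : r = Nat.choose (n + 2) 2 - ∑ k, Nat.choose (nk k + 1) 2) :
    HermiteSolvable n s nk A ↔
      ∃ B : Fin r → Fin 2 → ℝ,
        Function.Injective (Fin.append A B) ∧
        HermiteCorrect n (s + r) (Fin.append nk fun _ => 1) (Fin.append A B) := by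
  constructor
  · intro hS
    obtain ⟨hfin, hdim⟩ := finrank_hermite n
    let V := restrictTotalDegree (Fin 2) ℝ n
    have hV : ∀ p, p ∈ V ↔ p.totalDegree ≤ n := fun p => mem_restrictTotalDegree _ _ _
    let L : V →ₗ[ℝ] ((Σ k : Fin s, hermiteIdx (nk k)) → ℝ) := LinearMap.pi fun x =>
      ((MvPolynomial.aeval (A x.1)).toLinearMap ∘ₗ hermiteDlin x.2.1.1 x.2.1.2) ∘ₗ V.subtype
    have hL : ∀ p x, L p x = eval (A x.1) (Dij x.2.1.1 x.2.1.2 p.1) := fun p x => by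
      simp [L, MvPolynomial.aeval_eq_eval, hermiteDlin_apply]
    have hLs : Function.Surjective L := by
      intro c
      obtain ⟨p, hp, h⟩ := hS fun k i j =>
        if h : (i, j) ∈ hermiteIdx (nk k) then c ⟨k, (i, j), h⟩ else 0
      refine ⟨⟨p, (hV p).2 hp⟩, ?_⟩
      ext ⟨k, ⟨i, j⟩, hij⟩
      rw [hL, h k i j ((mem_hermiteIdx _ _).mp hij), dif_pos hij]
    have hrn := LinearMap.finrank_range_add_finrank_ker L
    rw [LinearMap.range_eq_top.mpr hLs, finrank_top, Module.finrank_fintype_fun_eq_card, hdim,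
      Fintype.card_sigma] at hrn
    simp only [Fintype.card_coe, card_hermiteIdx] at hrn
    let W := (LinearMap.ker L).map V.subtype
    have hWr : Module.finrank ℝ W = r := by
      have : Module.finrank ℝ W = Module.finrank ℝ (LinearMap.ker L) :=
        Submodule.finrank_map_subtype_eq V _
      omega
    have hWfin : Module.Finite ℝ W := inferInstance
    have hW : ∀ p, p ∈ W ↔ p.totalDegree ≤ n ∧
        ∀ (k : Fin s) (i j : ℕ), i + j + 1 ≤ nk k → eval (A k) (Dij i j p) = 0 := by
      intro p
      constructor
      · rintro ⟨⟨q, hq⟩, hq', rfl⟩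
        refine ⟨(hV q).1 hq, fun k i j hij => ?_⟩
        have := congrFun (LinearMap.mem_ker.mp hq') ⟨k, (i, j), (mem_hermiteIdx _ _).mpr hij⟩
        rw [hL] at this
        exact this
      · rintro ⟨hp, h⟩
        refine ⟨⟨p, (hV p).2 hp⟩, ?_, rfl⟩
        refine LinearMap.mem_ker.mpr ?_
        ext ⟨k, ⟨i, j⟩, hij⟩
        rw [hL]
        exact h k i j ((mem_hermiteIdx _ _).mp hij)
    obtain ⟨B, hB⟩ := hermite_exists_points r W hWfin hWr
    let E : W →ₗ[ℝ] (Fin r → ℝ) := LinearMap.pi fun t =>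
      (MvPolynomial.aeval (B t)).toLinearMap ∘ₗ W.subtype
    have hE : ∀ p t, E p t = eval (B t) p.1 := fun p t => by
      simp [E, MvPolynomial.aeval_eq_eval]
    have hEi : Function.Injective E := by
      rw [← LinearMap.ker_eq_bot, LinearMap.ker_eq_bot']
      intro p hp
      exact Subtype.ext (hB p.1 p.2 fun t => by rw [← hE, hp]; rfl)
    have hEs : Function.Surjective E :=
      (LinearMap.injective_iff_surjective_of_finrank_eq_finrank (by simp [hWr])).mp hEi
    have hdel : ∀ t, ∃ p ∈ W, ∀ u, eval (B u) p = if u = t then 1 else 0 := by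
      intro t
      obtain ⟨p, hp⟩ := hEs fun u => if u = t then 1 else 0
      exact ⟨p.1, p.2, fun u => by rw [← hE, hp]⟩
    refine ⟨B, ?_, ?_⟩
    · rw [Fin.append_injective_iff]
      refine ⟨hA, ?_, ?_⟩
      · intro t u htu
        obtain ⟨p, hp, h⟩ := hdel t
        by_contra hne
        have h1 := h t
        have h2 := h u
        rw [htu, h2] at h1
        simp [Ne.symm hne] at h1
      · intro k t hkt
        obtain ⟨p, hp, h⟩ := hdel t
        have h1 := h t
        have h2 := ((hW p).1 hp).2 k 0 0 (by simpa using hnk k)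
        rw [← hkt] at h1
        simp [Dij] at h1 h2
        rw [h2] at h1
        norm_num at h1
    · intro c
      have key : ∀ p : MvPolynomial (Fin 2) ℝ,
          (∀ (k : Fin (s + r)) (i j : ℕ), i + j + 1 ≤ Fin.append nk (fun _ => 1) k →
            eval (Fin.append A B k) (Dij i j p) = c k i j) ↔
          (∀ (k : Fin s) (i j : ℕ), i + j + 1 ≤ nk k →
            eval (A k) (Dij i j p) = c (Fin.castAdd r k) i j) ∧
          ∀ t, eval (B t) p = c (Fin.natAdd s t) 0 0 := by
        intro p
        constructor
        · intro h
          refine ⟨fun k i j hij => ?_, fun t => ?_⟩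
          · simpa using h (Fin.castAdd r k) i j (by simpa using hij)
          · simpa [Dij] using h (Fin.natAdd s t) 0 0 (by simp)
        · rintro ⟨h1, h2⟩ k i j hij
          induction k using Fin.addCases with
          | left k =>
            rw [Fin.append_left] at hij ⊢
            exact h1 k i j hij
          | right t =>
            rw [Fin.append_right] at hij ⊢
            obtain ⟨rfl, rfl⟩ : i = 0 ∧ j = 0 := by omega
            exact h2 t
      simp only [key]
      obtain ⟨p₀, hp₀, h₀⟩ := hS fun k i j => c (Fin.castAdd r k) i j
      obtain ⟨w, hw⟩ := hEs fun t => c (Fin.natAdd s t) 0 0 - eval (B t) p₀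
      have hwW := (hW w.1).1 w.2
      refine ⟨p₀ + w.1, ⟨?_, ?_, ?_⟩, ?_⟩
      · exact (totalDegree_add _ _).trans (max_le hp₀ hwW.1)
      · intro k i j hij
        rw [← hermiteDlin_apply, map_add, hermiteDlin_apply, hermiteDlin_apply, map_add,
          h₀ k i j hij, hwW.2 k i j hij, add_zero]
      · intro t
        rw [map_add, ← hE, hw]
        ring
      · rintro q ⟨hq, hq1, hq2⟩
        have hmem : q - p₀ - w.1 ∈ W := by
          refine W.sub_mem ((hW _).2 ⟨?_, ?_⟩) w.2
          · exact (totalDegree_sub _ _).trans (max_le hq hp₀)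
          · intro k i j hij
            rw [← hermiteDlin_apply, map_sub, hermiteDlin_apply, hermiteDlin_apply, map_sub,
              h₀ k i j hij, hq1 k i j hij, sub_self]
        have := hB _ hmem fun t => by
          rw [map_sub, map_sub, hq2, ← hE, hw]
          ring
        linear_combination this
  · rintro ⟨B, -, hC⟩ c
    obtain ⟨p, ⟨hp, h⟩, -⟩ := hC fun k i j => Fin.append c (fun _ _ _ => 0) k i j
    refine ⟨p, hp, fun k i j hij => ?_⟩
    simpa using h (Fin.castAdd r k) i j (by simpa using hij)
end
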